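/- Let (X, d, T) be a topological dynamical system. Then for every δ ∈ (0,1), the lower metric mean dimension satisfies mdim̲_M(X,d,T) = liminf_{ε→0} (1/log(1/ε)) · sup_{μ ∈ E_T(X)} h̲_μ^K(ε, δ), where h̲_μ^K denotes the lower Katok entropy. -/

import Mathlib

open Filter MeasureTheory Set Topology

variable {X : Type*}

/-- The dynamical (Bowen) metric `d_n(x,y) = max_{0 ≤ k ≤ n-1} d(T^k x, T^k y)`. -/
noncomputable def dynDist [MetricSpace X] (T : X → X) (n : ℕ) (x y : X) : ℝ :=
  ⨆ k ∈ Finset.range n, dist (T^[k] x) (T^[k] y)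

/-- The open dynamical ball `B_n(x, ε) = {y : d_n(x,y) < ε}`. -/
def dynBall [MetricSpace X] (T : X → X) (n : ℕ) (x : X) (ε : ℝ) : Set X :=
  {y | dynDist T n x y < ε}

/-- `s_n(K, ε)`: the maximal cardinality of an `(n,ε)`-separated subset of `K`. -/
noncomputable def sepNum [MetricSpace X] (T : X → X) (n : ℕ) (K : Set X) (ε : ℝ) : ℕ :=
  sSup {m | ∃ E : Finset X, ↑E ⊆ K ∧
    (∀ x ∈ E, ∀ y ∈ E, x ≠ y → ε < dynDist T n x y) ∧ E.card = m}

/-- `S(K, ε) = limsup_n (1/n) log s_n(K, ε)`. -/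
noncomputable def sepEnt [MetricSpace X] (T : X → X) (K : Set X) (ε : ℝ) : EReal :=
  limsup (fun n : ℕ => ((Real.log (sepNum T n K ε) / n : ℝ) : EReal)) atTop

/-- `r_n(K, ε)`: the minimal cardinality of an `(n,ε)`-spanning set for `K`. -/
noncomputable def spanNum [MetricSpace X] (T : X → X) (n : ℕ) (K : Set X) (ε : ℝ) : ℕ :=
  sInf {m | ∃ F : Finset X, (∀ x ∈ K, ∃ y ∈ F, dynDist T n x y ≤ ε) ∧ F.card = m}

/-- `R(K, ε) = limsup_n (1/n) log r_n(K, ε)`. -/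
noncomputable def spanEnt [MetricSpace X] (T : X → X) (K : Set X) (ε : ℝ) : EReal :=
  limsup (fun n : ℕ => ((Real.log (spanNum T n K ε) / n : ℝ) : EReal)) atTop

/-- Upper metric mean dimension. -/
noncomputable def mdimUpper [MetricSpace X] (T : X → X) : EReal :=
  limsup (fun ε : ℝ => sepEnt T univ ε / ((Real.log (1 / ε) : ℝ) : EReal)) (𝓝[>] (0:ℝ))

/-- Lower metric mean dimension. -/
noncomputable def mdimLower [MetricSpace X] (T : X → X) : EReal :=
  liminf (fun ε : ℝ => sepEnt T univ ε / ((Real.log (1 / ε) : ℝ) : EReal)) (𝓝[>] (0:ℝ))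

/-- The ergodic `T`-invariant Borel probability measures. -/
def ergodicMeasures [MeasurableSpace X] (T : X → X) : Set (Measure X) :=
  {μ | IsProbabilityMeasure μ ∧ Ergodic T μ}

/-- `U` is a finite open cover of `X`. -/
def IsFiniteOpenCover [TopologicalSpace X] (U : Finset (Set X)) : Prop :=
  (∀ V ∈ U, IsOpen V) ∧ ⋃₀ (U : Set (Set X)) = univ

/-- The cover `U^n = ⋁_{i=0}^{n-1} T^{-i} U`. -/
def dynRefine (T : X → X) (U : Finset (Set X)) (n : ℕ) : Set (Set X) :=
  {V | ∃ f : Fin n → Set X, (∀ i, f i ∈ U) ∧ V = ⋂ i : Fin n, T^[(i : ℕ)] ⁻¹' f i}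

/-- `N(C)`: the minimal cardinality of a subcover of `C`. -/
noncomputable def coverNum (C : Set (Set X)) : ℕ :=
  sInf {m | ∃ F : Finset (Set X), ↑F ⊆ C ∧ ⋃₀ (F : Set (Set X)) = univ ∧ F.card = m}

/-- `N_μ(U^n, δ)`: minimal number of members of `U^n` needed to cover a set of measure ≥ δ. -/
noncomputable def shapiraNum [MeasurableSpace X] (T : X → X) (μ : Measure X)
    (U : Finset (Set X)) (n : ℕ) (δ : ℝ) : ℕ :=
  sInf {m | ∃ F : Finset (Set X), ↑F ⊆ dynRefine T U n ∧
    ENNReal.ofReal δ ≤ μ (⋃₀ (F : Set (Set X))) ∧ F.card = m}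

/-- Shapira's entropy `h_μ^S(U, δ) = limsup_n (1/n) log N_μ(U^n, δ)`. -/
noncomputable def shapiraEnt [MeasurableSpace X] (T : X → X) (μ : Measure X)
    (U : Finset (Set X)) (δ : ℝ) : EReal :=
  limsup (fun n : ℕ => ((Real.log (shapiraNum T μ U n δ) / n : ℝ) : EReal)) atTop

/-- `N_μ^δ(n, ε)`: smallest number of open `(n,ε)`-dynamical balls whose union has
measure `> δ`. -/
noncomputable def katokNum [MetricSpace X] [MeasurableSpace X] (T : X → X) (μ : Measure X)
    (n : ℕ) (ε δ : ℝ) : ℕ :=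
  sInf {m | ∃ F : Finset X, ENNReal.ofReal δ < μ (⋃ x ∈ F, dynBall T n x ε) ∧ F.card = m}

/-- Katok's entropy `h_μ^K(ε, δ) = limsup_n (1/n) log N_μ^δ(n, ε)`. -/
noncomputable def katokEnt [MetricSpace X] [MeasurableSpace X] (T : X → X) (μ : Measure X)
    (ε δ : ℝ) : EReal :=
  limsup (fun n : ℕ => ((Real.log (katokNum T μ n ε δ) / n : ℝ) : EReal)) atTop

/-- Lower Katok entropy `h̲_μ^K(ε, δ) = liminf_n (1/n) log N_μ^δ(n, ε)`. -/
noncomputable def katokEntLower [MetricSpace X] [MeasurableSpace X] (T : X → X) (μ : Measure X)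
    (ε δ : ℝ) : EReal :=
  liminf (fun n : ℕ => ((Real.log (katokNum T μ n ε δ) / n : ℝ) : EReal)) atTop

/-- `Ñ_μ^δ(n, ε)`: smallest number of sets of `d_n`-diameter ≤ ε whose union has
measure `> δ`. -/
noncomputable def katokNumTilde [MetricSpace X] [MeasurableSpace X] (T : X → X) (μ : Measure X)
    (n : ℕ) (ε δ : ℝ) : ℕ :=
  sInf {m | ∃ F : Finset (Set X), (∀ A ∈ F, ∀ x ∈ A, ∀ y ∈ A, dynDist T n x y ≤ ε) ∧
    ENNReal.ofReal δ < μ (⋃₀ (F : Set (Set X))) ∧ F.card = m}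

/-- Brin–Katok local entropy `h_μ^{BK}(x, ε) = limsup_n -(1/n) log μ(B_n(x, ε))`. -/
noncomputable def brinKatok [MetricSpace X] [MeasurableSpace X] (T : X → X) (μ : Measure X)
    (x : X) (ε : ℝ) : EReal :=
  limsup (fun n : ℕ => -(ENNReal.log (μ (dynBall T n x ε))) / (n : EReal)) atTop

/-- Lower Brin–Katok local entropy `h̲_μ^{BK}(x, ε) = liminf_n -(1/n) log μ(B_n(x, ε))`. -/
noncomputable def brinKatokLower [MetricSpace X] [MeasurableSpace X] (T : X → X) (μ : Measure X)
    (x : X) (ε : ℝ) : EReal :=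
  liminf (fun n : ℕ => -(ENNReal.log (μ (dynBall T n x ε))) / (n : EReal)) atTop

/-- Local entropy function `h_d(x, ε) = inf { S(K, ε) : K closed neighborhood of x }`. -/
noncomputable def locEnt [MetricSpace X] (T : X → X) (x : X) (ε : ℝ) : EReal :=
  ⨅ K ∈ {K : Set X | IsClosed K ∧ K ∈ 𝓝 x}, sepEnt T K ε

/-- Local spanning entropy `h̃_d(x, ε) = inf { R(K, ε) : K closed neighborhood of x }`. -/
noncomputable def locSpanEnt [MetricSpace X] (T : X → X) (x : X) (ε : ℝ) : EReal :=
  ⨅ K ∈ {K : Set X | IsClosed K ∧ K ∈ 𝓝 x}, spanEnt T K ε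

/-- `U_x^n`: the union of all cells of `U^n` containing `x`. -/
def dynCoverCell (T : X → X) (U : Finset (Set X)) (n : ℕ) (x : X) : Set X :=
  ⋃₀ {V | V ∈ dynRefine T U n ∧ x ∈ V}

section Comb

variable {X ι : Type*} (T : X → X) (U : ι → Set X)

open Classical in
/-- Number of mismatches between the orbit of `x` and a word. -/
noncomputable def mism : X → List ι → ℕ
  | _, [] => 0
  | x, (d :: l) => (if x ∈ U d then 0 else 1) + mism (T x) l

open Classical in
/-- Number of visits of the orbit of `x` to `S` before time `L`. -/
noncomputable def vis (S : Set X) (L : ℕ) (x : X) : ℕ :=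
  ∑ t ∈ Finset.range L, if T^[t] x ∈ S then 1 else 0

lemma mism_append (l l' : List ι) : ∀ x : X,
    mism T U x (l ++ l') = mism T U x l + mism T U (T^[l.length] x) l' := by
  induction l with
  | nil => intro x; simp [mism]
  | cons d l ih => intro x; simp [mism, ih, add_assoc]

lemma mism_le_length (l : List ι) : ∀ x : X, mism T U x l ≤ l.length := by
  induction l with
  | nil => intro x; simp [mism]
  | cons d l ih =>
    intro x
    have := ih (T x)
    simp only [mism, List.length_cons]
    split_ifs <;> omega

lemma vis_add (S : Set X) (a b : ℕ) (x : X) :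
    vis T S (a + b) x = vis T S a x + vis T S b (T^[a] x) := by
  unfold vis
  rw [Finset.sum_range_add]
  congr 1
  apply Finset.sum_congr rfl
  intro t _
  rw [← Function.iterate_add_apply, add_comm t a]

lemma vis_le (S : Set X) (L : ℕ) (x : X) : vis T S L x ≤ L := by
  unfold vis
  calc _ ≤ ∑ t ∈ Finset.range L, 1 := Finset.sum_le_sum (fun t _ => by split_ifs <;> simp)
    _ = L := by simp

open Classical in
/-- The words of length `L` obtained by concatenating words of `Em`, `En` and the letter `d0`. -/
noncomputable def pat (d0 : ι) (m n : ℕ) (Em En : Finset (List ι)) (L : ℕ) : Finset (List ι) :=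
  if h0 : L = 0 then {[]} else
    (pat d0 m n Em En (L - 1)).image (fun l => d0 :: l) ∪
    ((if hm : 0 < m ∧ m ≤ L then Finset.image₂ (fun a l => a ++ l) Em (pat d0 m n Em En (L - m)) else ∅) ∪
    (if hn : 0 < n ∧ n ≤ L then Finset.image₂ (fun a l => a ++ l) En (pat d0 m n Em En (L - n)) else ∅))
termination_by L
decreasing_by all_goals omega

lemma pat_zero (d0 : ι) (m n : ℕ) (Em En : Finset (List ι)) : pat d0 m n Em En 0 = {[]} := by
  rw [pat]; simp

lemma pat_cons (d0 : ι) (m n : ℕ) (Em En : Finset (List ι)) (L : ℕ) {l : List ι}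
    (h : l ∈ pat d0 m n Em En L) : d0 :: l ∈ pat d0 m n Em En (L + 1) := by
  classical
  rw [pat]; simp [h]

lemma pat_replicate (d0 : ι) (m n : ℕ) (Em En : Finset (List ι)) (L : ℕ) {l : List ι}
    (h : l ∈ pat d0 m n Em En L) (s : ℕ) :
    List.replicate s d0 ++ l ∈ pat d0 m n Em En (s + L) := by
  induction s with
  | zero => simpa using h
  | succ s ih =>
    have := pat_cons d0 m n Em En _ ih
    rw [show s + 1 + L = s + L + 1 by ring]
    simpa [List.replicate_succ] using this

lemma pat_m (d0 : ι) (m n : ℕ) (Em En : Finset (List ι)) (hm : 0 < m) (L : ℕ) {a l : List ι}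
    (ha : a ∈ Em) (h : l ∈ pat d0 m n Em En L) : a ++ l ∈ pat d0 m n Em En (m + L) := by
  classical
  rw [pat, dif_neg (by omega)]
  apply Finset.mem_union_right
  apply Finset.mem_union_left
  rw [dif_pos ⟨hm, by omega⟩, show m + L - m = L by omega]
  exact Finset.mem_image₂_of_mem ha h

lemma pat_n (d0 : ι) (m n : ℕ) (Em En : Finset (List ι)) (hm : 0 < n) (L : ℕ) {a l : List ι}
    (ha : a ∈ En) (h : l ∈ pat d0 m n Em En L) : a ++ l ∈ pat d0 m n Em En (n + L) := by
  classical
  rw [pat, dif_neg (by omega)]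
  apply Finset.mem_union_right
  apply Finset.mem_union_right
  rw [dif_pos ⟨hm, by omega⟩, show n + L - n = L by omega]
  exact Finset.mem_image₂_of_mem ha h

lemma pat_length (d0 : ι) (m n : ℕ) (Em En : Finset (List ι))
    (hEm : ∀ l ∈ Em, l.length = m) (hEn : ∀ l ∈ En, l.length = n) :
    ∀ L, ∀ l ∈ pat d0 m n Em En L, l.length = L := by
  classical
  intro L
  induction L using Nat.strong_induction_on with
  | _ L ih =>
    intro l hl
    rw [pat] at hl
    split_ifs at hl with h0 h1 h2 h2 <;>
      simp only [Finset.mem_singleton, Finset.mem_union, Finset.mem_image, Finset.mem_image₂,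
        Finset.notMem_empty, or_false, false_or] at hl
    · simp [hl, h0]
    · rcases hl with ⟨l', h', rfl⟩ | ⟨a, ha, l', h', rfl⟩ | ⟨a, ha, l', h', rfl⟩
      · have := ih _ (by omega) _ h'; simp; omega
      · have := ih _ (by omega) _ h'; have := hEm _ ha; simp; omega
      · have := ih _ (by omega) _ h'; have := hEn _ ha; simp; omega
    · rcases hl with ⟨l', h', rfl⟩ | ⟨a, ha, l', h', rfl⟩
      · have := ih _ (by omega) _ h'; simp; omega
      · have := ih _ (by omega) _ h'; have := hEm _ ha; simp; omega
    · rcases hl with ⟨l', h', rfl⟩ | ⟨a, ha, l', h', rfl⟩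
      · have := ih _ (by omega) _ h'; simp; omega
      · have := ih _ (by omega) _ h'; have := hEn _ ha; simp; omega
    · rcases hl with ⟨l', h', rfl⟩
      have := ih _ (by omega) _ h'; simp; omega

lemma pat_card (d0 : ι) (m n : ℕ) (Em En : Finset (List ι)) (b : ℝ)
    (hb : Em.card * Real.exp (-(b * m)) + En.card * Real.exp (-(b * n)) + Real.exp (-b) ≤ 1) :
    ∀ L : ℕ, ((pat d0 m n Em En L).card : ℝ) ≤ Real.exp (b * L) := by
  classical
  intro L
  induction L using Nat.strong_induction_on with
  | _ L ih =>
    rcases Nat.eq_zero_or_pos L with rfl | hL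
    · simp [pat_zero]
    have key : ∀ (k : ℕ) (E : Finset (List ι)),
        (((if hm : 0 < k ∧ k ≤ L then
          Finset.image₂ (fun a l => a ++ l) E (pat d0 m n Em En (L - k)) else ∅) :
            Finset (List ι)).card : ℝ) ≤ E.card * Real.exp (-(b * k)) * Real.exp (b * L) := by
      intro k E
      split_ifs with h
      · have h1 := ih (L - k) (by omega)
        have h2 := Finset.card_image₂_le (fun a l => a ++ l) E (pat d0 m n Em En (L - k))
        calc _ ≤ ((E.card * (pat d0 m n Em En (L - k)).card : ℕ) : ℝ) := by exact_mod_cast h2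
          _ = E.card * (pat d0 m n Em En (L - k)).card := by push_cast; ring
          _ ≤ E.card * Real.exp (b * ((L - k : ℕ) : ℝ)) := by gcongr
          _ = _ := by
            rw [mul_assoc, ← Real.exp_add, Nat.cast_sub h.2]; ring_nf
      · simp; positivity
    have k1 : (((pat d0 m n Em En (L - 1)).image (fun l => d0 :: l)).card : ℝ)
        ≤ Real.exp (-b) * Real.exp (b * L) := by
      have h1 := ih (L - 1) (by omega)
      calc _ ≤ ((pat d0 m n Em En (L - 1)).card : ℝ) := by exact_mod_cast Finset.card_image_le
        _ ≤ _ := h1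
        _ = _ := by rw [← Real.exp_add, Nat.cast_sub (by omega)]; push_cast; ring_nf
    rw [pat, dif_neg (by omega)]
    have c1 := Finset.card_union_le ((pat d0 m n Em En (L - 1)).image (fun l => d0 :: l))
      ((if hm : 0 < m ∧ m ≤ L then
          Finset.image₂ (fun a l => a ++ l) Em (pat d0 m n Em En (L - m)) else ∅) ∪
       (if hn : 0 < n ∧ n ≤ L then
          Finset.image₂ (fun a l => a ++ l) En (pat d0 m n Em En (L - n)) else ∅))
    have c2 := Finset.card_union_le
      (if hm : 0 < m ∧ m ≤ L then
          Finset.image₂ (fun a l => a ++ l) Em (pat d0 m n Em En (L - m)) else ∅)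
       (if hn : 0 < n ∧ n ≤ L then
          Finset.image₂ (fun a l => a ++ l) En (pat d0 m n Em En (L - n)) else ∅)
    have c3 := c1.trans (Nat.add_le_add_left c2 _)
    have c4 : (_ : ℝ) ≤ _ := Nat.cast_le.mpr c3
    refine c4.trans ?_
    push_cast
    have := key m Em
    have := key n En
    have := mul_le_mul_of_nonneg_right hb (Real.exp_pos (b * L)).le
    linarith

lemma pat_exists (d0 : ι) (m n : ℕ) (Em En : Finset (List ι)) (hm : 0 < m) (hn : 0 < n)
    (hEm : ∀ l ∈ Em, l.length = m) (hEn : ∀ l ∈ En, l.length = n) (W G : Set X) (θ : ℝ)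
    (hθ : 0 ≤ θ) (hW : ∀ x ∈ W, ∃ l ∈ Em, mism T U x l = 0)
    (hG : ∀ x ∈ G, ∃ l ∈ En, (mism T U x l : ℝ) ≤ θ * n) :
    ∀ (L : ℕ) (x : X), ∃ l ∈ pat d0 m n Em En L, (mism T U x l : ℝ) ≤
      θ * (L - vis T W L x) + vis T Gᶜ L x + (n / m : ℝ) * L + n + m := by
  classical
  have hm' : (0:ℝ) < m := by exact_mod_cast hm
  have hnm : (n / m : ℝ) * m = n := by field_simp
  have hnm0 : (0:ℝ) ≤ n / m := by positivity
  intro L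
  induction L using Nat.strong_induction_on with
  | _ L ih =>
    intro x
    have hvW : (vis T W L x : ℝ) ≤ L := by exact_mod_cast vis_le T W L x
    by_cases hL : L < n + m
    · have := pat_replicate d0 m n Em En 0 (by simp [pat_zero] : [] ∈ _) L
      simp only [List.append_nil, add_zero] at this
      refine ⟨_, this, ?_⟩
      have h1 := mism_le_length T U (List.replicate L d0) x
      rw [List.length_replicate] at h1
      have h1' : (mism T U x (List.replicate L d0) : ℝ) ≤ L := by exact_mod_cast h1
      have h2 : (L : ℝ) ≤ n + m := by exact_mod_cast hL.le
      have : 0 ≤ θ * (L - vis T W L x) := mul_nonneg hθ (by linarith)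
      have : 0 ≤ (n / m : ℝ) * L := by positivity
      have : (0:ℝ) ≤ vis T Gᶜ L x := by positivity
      linarith
    push Not at hL
    by_cases hx : x ∈ G
    · by_cases hv : ∃ s, s < n ∧ T^[s] x ∈ W
      · obtain ⟨s, hs, hsW⟩ := hv
        obtain ⟨K, rfl⟩ : ∃ K, L = s + (m + K) := ⟨L - s - m, by omega⟩
        obtain ⟨l, hl, hlb⟩ := ih K (by omega) (T^[m] (T^[s] x))
        obtain ⟨a, ha, hab⟩ := hW _ hsW
        refine ⟨_, pat_replicate d0 m n Em En _ (pat_m d0 m n Em En hm K ha hl) s, ?_⟩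
        rw [mism_append, mism_append, List.length_replicate, hEm a ha, hab]
        have h1 := mism_le_length T U (List.replicate s d0) x
        rw [List.length_replicate] at h1
        have h1' : (mism T U x (List.replicate s d0) : ℝ) ≤ s := by exact_mod_cast h1
        rw [vis_add, vis_add, vis_add, vis_add]
        have v1 : (vis T W s x : ℝ) ≤ s := by exact_mod_cast vis_le T W s x
        have v2 : (vis T W m (T^[s] x) : ℝ) ≤ m := by exact_mod_cast vis_le T W m _
        have v3 : (0:ℝ) ≤ vis T Gᶜ s x := by positivity
        have v4 : (0:ℝ) ≤ vis T Gᶜ m (T^[s] x) := by positivity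
        have hs' : (s:ℝ) ≤ n := by exact_mod_cast hs.le
        have hs0 : 0 ≤ (n / m : ℝ) * s := by positivity
        push_cast
        have t1 := mul_nonneg hθ (sub_nonneg.mpr v1)
        have t2 := mul_nonneg hθ (sub_nonneg.mpr v2)
        have e1 : (n / m : ℝ) * (s + (m + K)) = (n / m : ℝ) * s + n + (n/m:ℝ) * K := by
          rw [mul_add, mul_add, hnm]; ring
        rw [e1]
        simp only [mul_sub, mul_add] at t1 t2 hlb ⊢
        linarith
      · push Not at hv
        obtain ⟨K, rfl⟩ : ∃ K, L = n + K := ⟨L - n, by omega⟩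
        obtain ⟨l, hl, hlb⟩ := ih K (by omega) (T^[n] x)
        obtain ⟨a, ha, hab⟩ := hG _ hx
        refine ⟨_, pat_n d0 m n Em En hn K ha hl, ?_⟩
        rw [mism_append, hEn a ha, vis_add, vis_add]
        have v1 : vis T W n x = 0 := by
          unfold vis
          apply Finset.sum_eq_zero
          intro t ht
          rw [if_neg (hv t (Finset.mem_range.mp ht))]
        have v3 : (0:ℝ) ≤ vis T Gᶜ n x := by positivity
        have : 0 ≤ (n / m : ℝ) * n := by positivity
        rw [v1]
        push_cast
        simp only [mul_sub, mul_add] at hlb ⊢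
        linarith
    · obtain ⟨K, rfl⟩ : ∃ K, L = 1 + K := ⟨L - 1, by omega⟩
      obtain ⟨l, hl, hlb⟩ := ih K (by omega) (T x)
      have := pat_cons d0 m n Em En _ hl
      rw [add_comm K 1] at this
      refine ⟨_, this, ?_⟩
      rw [vis_add, vis_add]
      have v1 : (vis T W 1 x : ℝ) ≤ 1 := by exact_mod_cast vis_le T W 1 x
      have v2 : vis T Gᶜ 1 x = 1 := by simp [vis, hx]
      have h1 : (mism T U x (d0 :: l) : ℝ) ≤ 1 + mism T U (T x) l := by
        simp only [mism]; push_cast; split_ifs <;> simp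
      have t1 := mul_nonneg hθ (sub_nonneg.mpr v1)
      rw [v2, Function.iterate_one]
      push_cast
      simp only [mul_sub, mul_add] at t1 hlb ⊢
      linarith

lemma corr_exists [Fintype ι] (hcov : ∀ x, ∃ d, x ∈ U d) (z : ℝ) (hz : 0 < z) (hz1 : z ≤ 1)
    (l : List ι) : ∀ k : ℕ, ∃ C : Finset (List ι), (∀ q ∈ C, q.length = l.length) ∧
      (C.card : ℝ) ≤ (1 / z) ^ k * (1 + Fintype.card ι * z) ^ l.length ∧
      ∀ x, mism T U x l ≤ k → ∃ q ∈ C, mism T U x q = 0 := by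
  classical
  induction l with
  | nil =>
    intro k
    refine ⟨{[]}, by simp, ?_, fun x _ => ⟨[], by simp, by simp [mism]⟩⟩
    simp only [Finset.card_singleton, Nat.cast_one, List.length_nil, pow_zero, mul_one]
    exact one_le_pow₀ (by rw [le_div_iff₀ hz]; linarith)
  | cons d l ih =>
    intro k
    obtain ⟨C, hC1, hC2, hC3⟩ := ih k
    set q : ℝ := 1 + Fintype.card ι * z with hq
    have hq1 : 1 ≤ q := by rw [hq]; have : 0 ≤ (Fintype.card ι : ℝ) * z := by positivity
                           linarith
    cases k with
    | zero =>
      refine ⟨C.image (fun l => d :: l), ?_, ?_, ?_⟩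
      · intro q hq
        obtain ⟨l', h', rfl⟩ := Finset.mem_image.mp hq
        simp [hC1 l' h']
      · calc ((C.image (fun l => d :: l)).card : ℝ) ≤ C.card := by
              exact_mod_cast Finset.card_image_le
          _ ≤ _ := hC2
          _ ≤ _ := by
            rw [List.length_cons]
            gcongr
            omega
      · intro x hx
        simp only [mism] at hx
        split_ifs at hx with hd
        · obtain ⟨q, h1, h2⟩ := hC3 (T x) (by omega)
          exact ⟨d :: q, Finset.mem_image_of_mem _ h1, by simp [mism, hd, h2]⟩
        · omega
    | succ k =>
      obtain ⟨C', hC1', hC2', hC3'⟩ := ih k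
      refine ⟨C.image (fun l => d :: l) ∪ Finset.image₂ (fun e l => e :: l) Finset.univ C',
        ?_, ?_, ?_⟩
      · intro q hq
        rcases Finset.mem_union.mp hq with h | h
        · obtain ⟨l', h', rfl⟩ := Finset.mem_image.mp h
          simp [hC1 l' h']
        · obtain ⟨e, _, l', h', rfl⟩ := Finset.mem_image₂.mp h
          simp [hC1' l' h']
      · have c1 := Finset.card_union_le (C.image (fun l => d :: l))
          (Finset.image₂ (fun e l => e :: l) Finset.univ C')
        have c2 : (C.image (fun l => d :: l)).card ≤ C.card := Finset.card_image_le
        have c3 := Finset.card_image₂_le (fun (e : ι) l => e :: l) Finset.univ C'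
        have c4 : ((C.image (fun l => d :: l) ∪
            Finset.image₂ (fun e l => e :: l) Finset.univ C').card : ℝ) ≤
            C.card + Fintype.card ι * C'.card := by
          have := c1.trans (Nat.add_le_add c2 c3)
          exact_mod_cast this
        calc _ ≤ _ := c4
          _ ≤ (1 / z) ^ (k+1) * q ^ l.length + Fintype.card ι * ((1 / z) ^ k * q ^ l.length) := by
            gcongr
          _ = (1 / z) ^ (k+1) * q ^ (d :: l).length := by
            rw [List.length_cons, pow_succ q, pow_succ (1/z), hq]
            field_simp
      · intro x hx
        simp only [mism] at hx
        split_ifs at hx with hd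
        · obtain ⟨q, h1, h2⟩ := hC3 (T x) (by omega)
          exact ⟨d :: q, Finset.mem_union_left _ (Finset.mem_image_of_mem _ h1),
            by simp [mism, hd, h2]⟩
        · obtain ⟨q, h1, h2⟩ := hC3' (T x) (by omega)
          obtain ⟨e, he⟩ := hcov x
          exact ⟨e :: q, Finset.mem_union_right _
            (Finset.mem_image₂_of_mem (Finset.mem_univ e) h1), by simp [mism, he, h2]⟩

lemma mism_zero_iff (l : List ι) : ∀ x : X, mism T U x l = 0 ↔
    ∀ (k : ℕ) (hk : k < l.length), T^[k] x ∈ U (l[k]) := by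
  induction l with
  | nil => intro x; simp [mism]
  | cons d l ih =>
    intro x
    simp only [mism, Nat.add_eq_zero_iff, ih]
    constructor
    · rintro ⟨h1, h2⟩ k hk
      cases k with
      | zero => by_contra h; simp at h; simp [h] at h1
      | succ k => simpa using h2 k (by simpa using hk)
    · intro h
      refine ⟨?_, fun k hk => ?_⟩
      · have := h 0 (by simp)
        simp at this; simp [this]
      · have := h (k+1) (by simpa using hk)
        rwa [List.getElem_cons_succ, Function.iterate_succ_apply] at this

lemma isOpen_mism [TopologicalSpace X] (hT : Continuous T) (hU : ∀ d, IsOpen (U d)) (l : List ι) :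
    ∀ c : ℝ, IsOpen {x | (mism T U x l : ℝ) ≤ c} := by
  induction l with
  | nil => intro c; simp [mism]
  | cons d l ih =>
    intro c
    have : {x | (mism T U x (d :: l) : ℝ) ≤ c} =
        (U d ∩ T ⁻¹' {x | (mism T U x l : ℝ) ≤ c}) ∪ T ⁻¹' {x | (mism T U x l : ℝ) ≤ c - 1} := by
      ext x
      simp only [mism, mem_ofPred_eq, mem_union, mem_inter_iff, mem_preimage]
      push_cast
      by_cases h : x ∈ U d
      · simp only [h, if_true, true_and, zero_add]
        constructor
        · intro h; exact Or.inl h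
        · rintro (h | h) <;> linarith
      · simp only [h, if_false, false_and, false_or]
        constructor <;> intro h <;> linarith
    rw [this]
    exact ((hU d).inter ((ih c).preimage hT)).union ((ih _).preimage hT)

end Comb

section Erg

variable {X : Type*} [MeasurableSpace X] (T : X → X)

lemma measurable_vis (hT : Measurable T) {S : Set X} (hS : MeasurableSet S) (L : ℕ) :
    Measurable (vis T S L) := by
  classical
  unfold vis
  apply Finset.measurable_sum
  intro t _
  exact Measurable.ite ((hT.iterate t) hS) measurable_const measurable_const

lemma vis_eq_indicator (S : Set X) (L : ℕ) (x : X) :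
    (vis T S L x : ℝ) = ∑ t ∈ Finset.range L, S.indicator (fun _ => (1:ℝ)) (T^[t] x) := by
  classical
  unfold vis
  push_cast
  apply Finset.sum_congr rfl
  intro t _
  simp [Set.indicator_apply]

lemma integral_vis {μ : Measure X} [IsProbabilityMeasure μ] (hT : MeasurePreserving T μ μ)
    {S : Set X} (hS : MeasurableSet S) (L : ℕ) :
    ∫ x, (vis T S L x : ℝ) ∂μ = L * μ.real S := by
  simp_rw [vis_eq_indicator]
  have hi : ∀ t : ℕ, Integrable (fun x => S.indicator (fun _ => (1:ℝ)) (T^[t] x)) μ := by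
    intro t
    exact (hT.iterate t).integrable_comp_of_integrable ((integrable_const (1:ℝ)).indicator hS)
  rw [integral_finsetSum _ (fun t _ => hi t)]
  have : ∀ t ∈ Finset.range L, ∫ x, S.indicator (fun _ => (1:ℝ)) (T^[t] x) ∂μ = μ.real S := by
    intro t _
    have e : (fun x => S.indicator (fun _ => (1:ℝ)) (T^[t] x)) =
        (T^[t] ⁻¹' S).indicator (fun _ => (1:ℝ)) := by
      ext x; rfl
    rw [e, integral_indicator ((hT.iterate t).measurable hS)]
    simp [(hT.iterate t).measureReal_preimage hS.nullMeasurableSet]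
  rw [Finset.sum_congr rfl this]
  simp

/-- Markov inequality for the number of visits. -/
lemma markov_vis {μ : Measure X} [IsProbabilityMeasure μ] (hT : MeasurePreserving T μ μ)
    {S : Set X} (hS : MeasurableSet S) (e : ℝ) (he : 0 < e) (h : μ.real S ≤ e ^ 2) (L : ℕ)
    (hL : 0 < L) : μ.real {x | e * L < vis T S L x} ≤ e := by
  have hL' : (0:ℝ) < L := by exact_mod_cast hL
  have hint : Integrable (fun x => (vis T S L x : ℝ)) μ := by
    apply Integrable.of_bound (C := L)
    · have := measurable_vis T hT.measurable hS L
      exact (measurable_from_top.comp this).aestronglyMeasurable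
    · filter_upwards with x
      simp only [Real.norm_natCast]
      exact_mod_cast vis_le T S L x
  have h1 := mul_meas_ge_le_integral_of_nonneg (μ := μ) (f := fun x => (vis T S L x : ℝ))
    (by filter_upwards with x; positivity) hint (e * L)
  rw [integral_vis T hT hS] at h1
  have h2 : μ.real {x | e * L < vis T S L x} ≤ μ.real {x | e * L ≤ vis T S L x} :=
    measureReal_mono (fun x hx => by
      simp only [mem_ofPred_eq] at hx ⊢; exact hx.le)
  have h3 : L * μ.real S ≤ L * e ^ 2 := by gcongr
  have h4 : (e * L) * μ.real {x | e * L ≤ vis T S L x} ≤ (e * L) * e := by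
    calc _ ≤ _ := h1
      _ ≤ _ := h3
      _ = _ := by ring
  exact h2.trans (le_of_mul_le_mul_left h4 (by positivity))

/-- von Neumann ergodic theorem, for indicators, in measure. -/
lemma vonNeumann {μ : Measure X} [IsProbabilityMeasure μ] (hT : MeasurePreserving T μ μ)
    {S : Set X} (hS : MeasurableSet S) : ∃ g : Lp ℝ 2 μ, Lp.compMeasurePreserving T hT g = g ∧
      TendstoInMeasure μ (fun n x => (vis T S n x : ℝ) / n) atTop g := by
  set K : Lp ℝ 2 μ →L[ℝ] Lp ℝ 2 μ :=
    (Lp.compMeasurePreservingₗᵢ ℝ T hT).toContinuousLinearMap with hK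
  have hK1 : ‖K‖ ≤ 1 := LinearIsometry.norm_toContinuousLinearMap_le _
  set f : Lp ℝ 2 μ := indicatorConstLp 2 hS (measure_ne_top μ S) (1:ℝ) with hf
  have hlim := K.tendsto_birkhoffAverage_orthogonalProjection hK1 f
  set g := (K.eqLocus (1 : Lp ℝ 2 μ →L[ℝ] Lp ℝ 2 μ)).orthogonalProjectionOnto f with hg
  refine ⟨g, ?_, ?_⟩
  · have := g.2
    exact this
  · have h1 := tendstoInMeasure_of_tendsto_Lp hlim
    refine h1.congr_left (fun n => ?_)
    have hit : ∀ t : ℕ, (K^[t] f : X → ℝ) =ᵐ[μ] fun x => S.indicator (fun _ => (1:ℝ)) (T^[t] x) := by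
      intro t
      have e : K^[t] f = Lp.compMeasurePreserving (T^[t]) (hT.iterate t) f := by
        have := Lp.compMeasurePreserving_iterate (E := ℝ) (p := 2) hT t
        exact congrFun this f
      rw [e]
      refine (Lp.coeFn_compMeasurePreserving f (hT.iterate t)).trans ?_
      have := indicatorConstLp_coeFn (p := 2) (hs := hS) (hμs := measure_ne_top μ S) (c := (1:ℝ))
      exact (hT.iterate t).quasiMeasurePreserving.ae_eq_comp this
    have hall : ∀ᵐ x ∂μ, ∀ t : ℕ, (K^[t] f : X → ℝ) x = S.indicator (fun _ => (1:ℝ)) (T^[t] x) :=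
      ae_all_iff.mpr hit
    have hsum := Lp.coeFn_finsetSum (Finset.range n) (fun t => K^[t] f)
    have hsm := Lp.coeFn_smul ((n:ℝ)⁻¹) (∑ t ∈ Finset.range n, K^[t] f)
    filter_upwards [hall, hsum, hsm] with x h1 h2 h3
    simp only [birkhoffAverage, birkhoffSum, id]
    rw [h3, Pi.smul_apply, h2, Finset.sum_apply, vis_eq_indicator, Finset.sum_congr rfl (fun t _ => h1 t)]
    simp [div_eq_inv_mul]
  
lemma tendsto_setIntegral_vis {μ : Measure X} [IsProbabilityMeasure μ] (hT : MeasurePreserving T μ μ)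
    {S : Set X} (hS : MeasurableSet S) {A : Set X} (hA : MeasurableSet A) (hAT : T ⁻¹' A = A)
    (ns : ℕ → ℕ) (hns : StrictMono ns) (c : ℝ)
    (h : ∀ᵐ x ∂μ, Tendsto (fun k => (vis T S (ns k) x : ℝ) / (ns k)) atTop (𝓝 c)) :
    μ.real (A ∩ S) = μ.real A * c := by
  have h1 : Tendsto (fun k => ∫ x in A, (vis T S (ns k) x : ℝ) / (ns k) ∂μ) atTop
      (𝓝 (∫ x in A, c ∂μ)) := by
    refine tendsto_integral_of_dominated_convergence (fun _ => 1) ?_ (integrable_const _) ?_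
      (ae_restrict_of_ae h)
    · intro k
      have := measurable_vis T hT.measurable hS (ns k)
      exact ((measurable_from_top.comp this : Measurable (fun x => (vis T S (ns k) x : ℝ))).div_const
        _).aestronglyMeasurable
    · intro k
      filter_upwards with x
      rw [Real.norm_of_nonneg (by positivity)]
      apply div_le_one_of_le₀ _ (by positivity)
      exact_mod_cast vis_le T S _ x
  have h2 : ∀ k, 0 < ns k → ∫ x in A, (vis T S (ns k) x : ℝ) / (ns k) ∂μ = μ.real (A ∩ S) := by
    intro k hk
    have hAn : ∀ t : ℕ, T^[t] ⁻¹' A = A := by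
      intro t
      induction t with
      | zero => rfl
      | succ t ih => rw [Function.iterate_succ, preimage_comp, ih, hAT]
    have e : ∀ x, A.indicator (fun x => (vis T S (ns k) x : ℝ)) x = vis T (A ∩ S) (ns k) x := by
      intro x
      rw [vis_eq_indicator]
      by_cases hx : x ∈ A
      · rw [indicator_of_mem hx, vis_eq_indicator]
        apply Finset.sum_congr rfl
        intro t _
        have : T^[t] x ∈ A := by rw [← mem_preimage, hAn]; exact hx
        by_cases hs : T^[t] x ∈ S
        · rw [indicator_of_mem hs, indicator_of_mem (show T^[t] x ∈ A ∩ S from ⟨this, hs⟩)]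
        · rw [indicator_of_notMem hs, indicator_of_notMem (show T^[t] x ∉ A ∩ S from fun h => hs h.2)]
      · rw [indicator_of_notMem hx]
        symm
        apply Finset.sum_eq_zero
        intro t _
        have : T^[t] x ∉ A := by rw [← mem_preimage, hAn]; exact hx
        simp [this]
    rw [integral_div, ← integral_indicator hA]
    simp_rw [e]
    rw [integral_vis T hT (hA.inter hS)]
    field_simp
  have h3 : Tendsto (fun k => ∫ x in A, (vis T S (ns k) x : ℝ) / (ns k) ∂μ) atTop
      (𝓝 (μ.real (A ∩ S))) := by
    refine tendsto_const_nhds.congr' ?_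
    filter_upwards [eventually_gt_atTop 0] with k hk
    exact (h2 k (lt_of_lt_of_le hk (hns.id_le k))).symm
  have := tendsto_nhds_unique h3 h1
  rw [this]; simp

lemma ergodic_vis {μ : Measure X} [IsProbabilityMeasure μ] (hT : Ergodic T μ)
    {S : Set X} (hS : MeasurableSet S) (δ e : ℝ) (hδ : δ < μ.real S) (he : 0 < e) :
    ∃ L0, ∀ L ≥ L0, μ.real {x | (vis T S L x : ℝ) ≤ δ * L} ≤ e := by
  obtain ⟨g, hg, hlim⟩ := vonNeumann T hT.toMeasurePreserving hS
  obtain ⟨c, hc⟩ : ∃ c, (g : X → ℝ) =ᵐ[μ] Function.const X c := by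
    apply hT.ae_eq_const_of_ae_eq_comp_ae (Lp.aestronglyMeasurable g)
    have := Lp.coeFn_compMeasurePreserving g hT.toMeasurePreserving
    rw [hg] at this
    exact this.symm
  have hlim' := hlim.congr_right hc
  obtain ⟨ns, hns, hae⟩ := hlim'.exists_seq_tendsto_ae
  have hcS := tendsto_setIntegral_vis T hT.toMeasurePreserving hS MeasurableSet.univ rfl ns hns c hae
  simp only [univ_inter, probReal_univ, one_mul] at hcS
  have h1 := (tendstoInMeasure_iff_measureReal_norm.mp hlim') (c - δ) (by linarith)
  have h2 := (h1.eventually (gt_mem_nhds he)).and (eventually_gt_atTop 0)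
  obtain ⟨L0, hL0⟩ := eventually_atTop.mp h2
  refine ⟨L0, fun L hL => ?_⟩
  obtain ⟨h3, h4⟩ := hL0 L hL
  refine le_trans (measureReal_mono ?_) h3.le
  intro x hx
  simp only [mem_ofPred_eq, Function.const_apply] at hx ⊢
  have hL' : (0:ℝ) < L := by exact_mod_cast h4
  have : (vis T S L x : ℝ) / L ≤ δ := by rw [div_le_iff₀ hL']; exact hx
  rw [Real.norm_eq_abs, abs_sub_comm]
  exact le_trans (by linarith) (le_abs_self _)

end Erg

section Decomp
open ProbabilityTheory MeasurableSpace
variable {X : Type*} [MeasurableSpace X] [StandardBorelSpace X] (T : X → X)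

lemma ed_mix {μ : Measure X} [IsProbabilityMeasure μ] {B : Set X} (hB : MeasurableSet B) :
    μ B = ∫⁻ y, condExpKernel μ (invariants T) y B ∂μ := by
  have h := condExpKernel_comp_trim (μ := μ) (invariants_le T)
  conv_lhs => rw [← h]
  rw [Measure.bind_apply hB (Kernel.aemeasurable _)]
  exact lintegral_trim (invariants_le T) (Kernel.measurable_coe _ hB)

lemma ed_meas {μ : Measure X} [IsProbabilityMeasure μ] {B : Set X} (hB : MeasurableSet B) :
    Measurable (fun y => condExpKernel μ (invariants T) y B) :=
  (Kernel.measurable_coe (condExpKernel μ (invariants T)) hB).mono (invariants_le T) le_rfl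

lemma ed_ae {μ : Measure X} [IsProbabilityMeasure μ] {P : X → Prop} (h : ∀ᵐ x ∂μ, P x) :
    ∀ᵐ y ∂μ, ∀ᵐ x ∂(condExpKernel μ (invariants T) y), P x := by
  obtain ⟨N, hN, hNm, hN0⟩ := exists_measurable_superset_of_null h
  rw [ed_mix T hNm, lintegral_eq_zero_iff (ed_meas T hNm)] at hN0
  filter_upwards [hN0] with y hy
  exact measure_mono_null hN hy

lemma ed_inv {μ : Measure X} [IsProbabilityMeasure μ] {A : Set X} (hA : MeasurableSet A)
    (hAT : T ⁻¹' A = A) :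
    ∀ᵐ y ∂μ, (condExpKernel μ (invariants T) y).real A = A.indicator (fun _ => (1:ℝ)) y := by
  have h1 := condExpKernel_ae_eq_condExp (μ := μ) (invariants_le T) hA
  have h2 : μ[A.indicator (fun _ => (1:ℝ)) | invariants T] = A.indicator (fun _ => (1:ℝ)) := by
    apply condExp_of_stronglyMeasurable (invariants_le T)
    · apply StronglyMeasurable.indicator stronglyMeasurable_const
      exact measurableSet_invariants.2 ⟨hA, hAT⟩
    · exact (integrable_const _).indicator hA
  filter_upwards [h1] with y hy
  rw [hy]; exact congrFun h2 y

lemma ed_inv_ae {μ : Measure X} [IsProbabilityMeasure μ] (hT : MeasurePreserving T μ μ)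
    {A : Set X} (hA : MeasurableSet A) (hAT : T ⁻¹' A =ᵐ[μ] A) :
    ∀ᵐ y ∂μ, (condExpKernel μ (invariants T) y).real A = A.indicator (fun _ => (1:ℝ)) y := by
  obtain ⟨A', hA', h1, h2⟩ := hT.quasiMeasurePreserving.exists_preimage_eq_of_preimage_ae
    hA.nullMeasurableSet hAT
  have h3 : ∀ᵐ x ∂μ, x ∈ A' ↔ x ∈ A := eventuallyEq_set.1 h1
  filter_upwards [ed_inv T hA' h2, ed_ae T h3, h3] with y h4 h5 h6
  have : (condExpKernel μ (invariants T) y).real A = (condExpKernel μ (invariants T) y).real A' :=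
    measureReal_congr (eventuallyEq_set.2 h5).symm
  rw [this, h4]
  by_cases h7 : y ∈ A
  · rw [indicator_of_mem h7, indicator_of_mem (h6.2 h7)]
  · rw [indicator_of_notMem h7, indicator_of_notMem (fun h => h7 (h6.1 h))]

lemma ed_const {μ : Measure X} [IsProbabilityMeasure μ] (hT : MeasurePreserving T μ μ)
    {g : X → ℝ} (hg : Measurable g) (hgT : g ∘ T =ᵐ[μ] g) :
    ∀ᵐ y ∂μ, ∀ᵐ x ∂(condExpKernel μ (invariants T) y), g x = g y := by
  have h1 : ∀ᵐ y ∂μ, ∀ q : ℚ, (condExpKernel μ (invariants T) y).real {x | g x < q} =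
      {x | g x < q}.indicator (fun _ => (1:ℝ)) y := by
    rw [ae_all_iff]
    intro q
    apply ed_inv_ae T hT (measurableSet_lt hg measurable_const)
    apply eventuallyEq_set.2
    filter_upwards [hgT] with x hx
    have : g (T x) = g x := hx
    simp [this]
  filter_upwards [h1] with y hy
  have h2 : ∀ᵐ x ∂(condExpKernel μ (invariants T) y), ∀ q : ℚ, (g x < q ↔ g y < q) := by
    rw [ae_all_iff]
    intro q
    have := hy q
    by_cases hq : g y < q
    · simp only [hq, iff_true]
      rw [Set.indicator_of_mem (by exact hq)] at this
      have h3 := (prob_compl_eq_zero_iff (μ := condExpKernel μ (invariants T) y)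
        (measurableSet_lt hg (measurable_const (a := (q:ℝ))))).2
        (by rw [measureReal_def] at this; exact (ENNReal.toReal_eq_one_iff _).1 this)
      exact h3
    · simp only [hq, iff_false]
      rw [Set.indicator_of_notMem (by exact hq)] at this
      rw [measureReal_eq_zero_iff] at this
      rw [ae_iff]
      simpa using this
  filter_upwards [h2] with x hx
  apply le_antisymm
  · by_contra! h
    obtain ⟨q, h3, h4⟩ := exists_rat_btwn h
    exact absurd ((hx q).2 h3) (not_lt.2 h4.le)
  · by_contra! h
    obtain ⟨q, h3, h4⟩ := exists_rat_btwn h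
    exact absurd ((hx q).1 h3) (not_lt.2 h4.le)

lemma ed_map {μ : Measure X} [IsProbabilityMeasure μ] (hT : MeasurePreserving T μ μ)
    {B : Set X} (hB : MeasurableSet B) :
    ∀ᵐ y ∂μ, condExpKernel μ (invariants T) y (T ⁻¹' B) = condExpKernel μ (invariants T) y B := by
  have hTB := hT.measurable hB
  have h1 := condExpKernel_ae_eq_condExp (μ := μ) (invariants_le T) hTB
  have h2 := condExpKernel_ae_eq_condExp (μ := μ) (invariants_le T) hB
  have hi : Integrable (B.indicator (fun _ => (1:ℝ))) μ := (integrable_const _).indicator hB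
  have hi' : Integrable ((T⁻¹' B).indicator (fun _ => (1:ℝ))) μ := (integrable_const _).indicator hTB
  have h3 : μ⟦B | invariants T⟧ =ᵐ[μ] μ⟦T ⁻¹' B | invariants T⟧ := by
    apply ae_eq_condExp_of_forall_setIntegral_eq (invariants_le T) hi'
    · intro s _ _
      exact integrable_condExp.integrableOn
    · intro s hs _
      rw [setIntegral_condExp (invariants_le T) hi hs]
      have hs1 := (measurableSet_invariants.1 hs).1
      have hs2 := (measurableSet_invariants.1 hs).2
      rw [integral_indicator_const _ hB, integral_indicator_const _ hTB]
      simp only [measureReal_def, Measure.restrict_apply hB, Measure.restrict_apply hTB]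
      have : T ⁻¹' B ∩ s = T ⁻¹' (B ∩ s) := by rw [preimage_inter, hs2]
      rw [this, hT.measure_preimage (hB.inter hs1).nullMeasurableSet]
    · exact stronglyMeasurable_condExp.aestronglyMeasurable
  filter_upwards [h1, h2, h3] with y h4 h5 h6
  have : (condExpKernel μ (invariants T) y).real (T⁻¹' B) =
    (condExpKernel μ (invariants T) y).real B := by rw [h4, h5, h6]
  exact (measureReal_eq_measureReal_iff).1 this

lemma ed_invariant {μ : Measure X} [IsProbabilityMeasure μ] (hT : MeasurePreserving T μ μ) :
    ∀ᵐ y ∂μ, MeasurePreserving T (condExpKernel μ (invariants T) y)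
      (condExpKernel μ (invariants T) y) := by
  set C := generateSetAlgebra (countableGeneratingSet X) with hC
  have hCc : C.Countable := countable_generateSetAlgebra (countable_countableGeneratingSet (α := X))
  have hgen : ‹MeasurableSpace X› = generateFrom C := by
    rw [hC, generateFrom_generateSetAlgebra_eq, generateFrom_countableGeneratingSet]
  have hmeas : ∀ B ∈ C, MeasurableSet B := by
    intro B hB
    rw [hgen]; exact measurableSet_generateFrom hB
  have hpi : IsPiSystem C := fun a ha b hb _ => (isSetAlgebra_generateSetAlgebra).inter_mem ha hb
  have h1 : ∀ᵐ y ∂μ, ∀ B ∈ C, condExpKernel μ (invariants T) y (T ⁻¹' B) =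
      condExpKernel μ (invariants T) y B := by
    rw [ae_ball_iff hCc]
    intro B hB
    exact ed_map T hT (hmeas B hB)
  filter_upwards [h1] with y hy
  refine ⟨hT.measurable, ?_⟩
  apply ext_of_generate_finite C hgen hpi
  · intro s hs
    rw [Measure.map_apply hT.measurable (hmeas s hs)]
    exact hy s hs
  · rw [Measure.map_apply hT.measurable MeasurableSet.univ]; simp

theorem ergodic_decomp {μ : Measure X} [IsProbabilityMeasure μ] (hT : MeasurePreserving T μ μ) :
    ∀ᵐ y ∂μ, Ergodic T (condExpKernel μ (invariants T) y) := by
  set C := generateSetAlgebra (countableGeneratingSet X) with hC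
  have hCc : C.Countable := countable_generateSetAlgebra (countable_countableGeneratingSet (α := X))
  have hgen : ‹MeasurableSpace X› = generateFrom C := by
    rw [hC, generateFrom_generateSetAlgebra_eq, generateFrom_countableGeneratingSet]
  have hmeas : ∀ B ∈ C, MeasurableSet B := by
    intro B hB
    rw [hgen]; exact measurableSet_generateFrom hB
  have hpi : IsPiSystem C := fun a ha b hb _ => (isSetAlgebra_generateSetAlgebra).inter_mem ha hb
  have h1 : ∀ᵐ y ∂μ, ∀ B ∈ C, ∃ ns : ℕ → ℕ, StrictMono ns ∧ ∃ c : ℝ,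
      ∀ᵐ x ∂(condExpKernel μ (invariants T) y),
        Tendsto (fun k => (vis T B (ns k) x : ℝ) / (ns k)) atTop (𝓝 c) := by
    rw [ae_ball_iff hCc]
    intro B hB
    obtain ⟨g, hg, hlim⟩ := vonNeumann T hT (hmeas B hB)
    obtain ⟨ns, hns, h2⟩ := hlim.exists_seq_tendsto_ae
    have h3 : (g : X → ℝ) ∘ T =ᵐ[μ] g := by
      have := Lp.coeFn_compMeasurePreserving g hT
      rw [hg] at this
      exact this.symm
    filter_upwards [ed_const T hT (Lp.stronglyMeasurable g).measurable h3, ed_ae T h2] with y h4 h5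
    refine ⟨ns, hns, g y, ?_⟩
    filter_upwards [h4, h5] with x h6 h7
    rw [← h6]
    exact h7
  filter_upwards [h1, ed_invariant T hT] with y hy hinv
  refine ⟨hinv, ⟨?_⟩⟩
  intro A hA hAT
  set ν := condExpKernel μ (invariants T) y with hν
  have h4 : ∀ B ∈ C, ν (A ∩ B) = ν A * ν B := by
    intro B hB
    obtain ⟨ns, hns, c, h⟩ := hy B hB
    have e1 := tendsto_setIntegral_vis T hinv (hmeas B hB) hA hAT ns hns c h
    have e2 := tendsto_setIntegral_vis T hinv (hmeas B hB) MeasurableSet.univ (by simp) ns hns c h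
    simp at e2
    rw [← e2] at e1
    rw [← ENNReal.toReal_eq_toReal_iff' (measure_ne_top _ _) (by finiteness), ENNReal.toReal_mul]
    exact e1
  have h5 : ν.restrict A = ν A • ν := by
    apply ext_of_generate_finite C hgen hpi
    · intro s hs
      rw [Measure.restrict_apply (hmeas s hs), inter_comm, h4 s hs]; simp
    · simp
  have h6 : ν A = ν A * ν A := by
    have := congrArg (fun m => m A) h5
    simpa [Measure.restrict_apply hA] using this
  have h7 : ν A = 0 ∨ ν A = 1 := by
    have h8 : ν.real A = ν.real A * ν.real A := by
      rw [measureReal_def, ← ENNReal.toReal_mul, ← h6]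
    have : ν.real A * (ν.real A - 1) = 0 := by linarith
    rcases mul_eq_zero.1 this with h | h
    · left; exact (measureReal_eq_zero_iff).1 h
    · right
      have : ν.real A = 1 := by linarith
      exact (ENNReal.toReal_eq_one_iff _).1 this
  rw [eventuallyConst_set']
  rcases h7 with h | h
  · left; exact ae_eq_empty.2 h
  · right; exact ae_eq_univ.2 ((prob_compl_eq_zero_iff hA).2 h)

end Decomp

section Ham

variable {X ι : Type*} (T : X → X) (U : ι → Set X)

/-- Points matching some word of `E` with at most `c` mismatches. -/
def good (E : Finset (List ι)) (c : ℝ) : Set X := {x | ∃ l ∈ E, (mism T U x l : ℝ) ≤ c}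

lemma isOpen_good [TopologicalSpace X] (hT : Continuous T) (hU : ∀ d, IsOpen (U d))
    (E : Finset (List ι)) (c : ℝ) : IsOpen (good T U E c) := by
  have : good T U E c = ⋃ l ∈ E, {x | (mism T U x l : ℝ) ≤ c} := by
    ext x; simp [good]
  rw [this]
  exact isOpen_biUnion fun l _ => isOpen_mism T U hT hU l c

lemma exp_small (η : ℝ) (hη : 0 < η) : ∃ n0 : ℕ, 0 < n0 ∧ ∀ n : ℕ, n0 ≤ n →
    2 * Real.exp (-(η / 2 * n)) + Real.exp (-η) ≤ 1 := by
  have h1 : Tendsto (fun n : ℕ => 2 * Real.exp (-(η / 2 * n)) + Real.exp (-η)) atTop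
      (𝓝 (2 * 0 + Real.exp (-η))) := by
    refine Tendsto.add (Tendsto.const_mul _ ?_) tendsto_const_nhds
    apply Real.tendsto_exp_neg_atTop_nhds_zero.comp
    exact (tendsto_natCast_atTop_atTop).const_mul_atTop (by positivity)
  have h2 : (2 * 0 + Real.exp (-η)) < 1 := by
    have : Real.exp (-η) < 1 := by rw [Real.exp_lt_one_iff]; linarith
    linarith
  obtain ⟨n0, h⟩ := eventually_atTop.1 (h1.eventually (gt_mem_nhds h2))
  exact ⟨n0 + 1, by omega, fun n hn => (h n (by omega)).le⟩

lemma block2 (d0 : ι) (a η θ : ℝ) (ha : 0 ≤ a) (hη : 0 < η) (hθ : 0 ≤ θ) (m n n0 : ℕ)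
    (hn0 : 0 < n0) (hn0' : ∀ n : ℕ, n0 ≤ n → 2 * Real.exp (-(η / 2 * n)) + Real.exp (-η) ≤ 1)
    (hn : n0 ≤ n) (hnm : n ≤ m) (hnm' : (n / m : ℝ) ≤ η / 2)
    (Em En : Finset (List ι))
    (hEm : ∀ l ∈ Em, l.length = m) (hEn : ∀ l ∈ En, l.length = n)
    (hcm : (Em.card : ℝ) ≤ Real.exp (a * m)) (hcn : (En.card : ℝ) ≤ Real.exp ((a + η / 2) * n))
    (W G : Set X) (hW : ∀ x ∈ W, ∃ l ∈ Em, mism T U x l = 0)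
    (hG : ∀ x ∈ G, ∃ l ∈ En, (mism T U x l : ℝ) ≤ θ * n) :
    ∃ L0 : ℕ, ∀ L ≥ L0, ∃ E : Finset (List ι), (∀ l ∈ E, l.length = L) ∧
      (E.card : ℝ) ≤ Real.exp ((a + η) * L) ∧
      ∀ x, ∃ l ∈ E, (mism T U x l : ℝ) ≤ θ * (L - vis T W L x) + vis T Gᶜ L x + η * L := by
  obtain ⟨L0, hL0⟩ := exists_nat_ge ((n + m) / (η / 2) : ℝ)
  refine ⟨L0, fun L hL => ⟨pat d0 m n Em En L, pat_length d0 m n Em En hEm hEn L, ?_, ?_⟩⟩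
  · apply pat_card
    have e1 : (Em.card : ℝ) * Real.exp (-((a + η) * m)) ≤ Real.exp (-(η / 2 * m)) := by
      calc (Em.card : ℝ) * Real.exp (-((a + η) * m)) ≤
          Real.exp (a * m) * Real.exp (-((a + η) * m)) := by gcongr
        _ = Real.exp (-(η * m)) := by rw [← Real.exp_add]; congr 1; ring
        _ ≤ _ := by
          apply Real.exp_le_exp.2
          have : (0:ℝ) ≤ m := by positivity
          nlinarith
    have e2 : (En.card : ℝ) * Real.exp (-((a + η) * n)) ≤ Real.exp (-(η / 2 * n)) := by
      calc (En.card : ℝ) * Real.exp (-((a + η) * n)) ≤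
          Real.exp ((a + η / 2) * n) * Real.exp (-((a + η) * n)) := by gcongr
        _ = Real.exp (-(η / 2 * n)) := by rw [← Real.exp_add]; congr 1; ring
        _ ≤ _ := le_rfl
    have e3 : Real.exp (-(a + η)) ≤ Real.exp (-η) := Real.exp_le_exp.2 (by linarith)
    have e4 := hn0' n hn
    have e5 := hn0' m (hn.trans hnm)
    linarith
  · intro x
    obtain ⟨l, hl, h⟩ := pat_exists T U d0 m n Em En (by omega) (by omega) hEm hEn W G θ hθ hW hG L x
    refine ⟨l, hl, h.trans ?_⟩
    have hLr : (L0 : ℝ) ≤ L := by exact_mod_cast hL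
    have h2 : ((n + m) : ℝ) ≤ L * (η / 2) := by
      rw [← div_le_iff₀ (by positivity)]; linarith
    have h3 : (n / m : ℝ) * L ≤ η / 2 * L := by gcongr
    linarith

lemma block1 (d0 : ι) (a η θ : ℝ) (ha : 0 ≤ a) (hη : 0 < η) (hθ : 0 ≤ θ) (n n0 : ℕ)
    (hn0 : 0 < n0) (hn0' : ∀ n : ℕ, n0 ≤ n → 2 * Real.exp (-(η / 2 * n)) + Real.exp (-η) ≤ 1)
    (hn : n0 ≤ n) (En : Finset (List ι)) (hEn : ∀ l ∈ En, l.length = n)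
    (hcn : (En.card : ℝ) ≤ Real.exp ((a + η / 2) * n)) :
    ∃ L0 : ℕ, ∀ L ≥ L0, ∃ E : Finset (List ι), (∀ l ∈ E, l.length = L) ∧
      (E.card : ℝ) ≤ Real.exp ((a + η) * L) ∧
      ∀ x, ∃ l ∈ E, (mism T U x l : ℝ) ≤ θ * L + vis T (good T U En (θ * n))ᶜ L x + η * L := by
  obtain ⟨m, hm⟩ := exists_nat_ge (max (n:ℝ) (n / (η / 2)))
  have hm1 : n ≤ m := by exact_mod_cast (le_max_left _ _).trans hm
  have hm2 : (n : ℝ) / (η / 2) ≤ m := (le_max_right _ _).trans hm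
  have hmpos : (0:ℝ) < m := by
    have : 0 < m := by omega
    exact_mod_cast this
  have hm3 : (n / m : ℝ) ≤ η / 2 := by
    rw [div_le_iff₀ hmpos]
    rw [div_le_iff₀ (by positivity)] at hm2
    linarith
  obtain ⟨L0, h⟩ := block2 T U d0 a η θ ha hη hθ m n n0 hn0 hn0' hn hm1 hm3 ∅ En (by simp) hEn
    (by simp; positivity) hcn ∅ (good T U En (θ * n)) (by simp) (fun x hx => hx)
  refine ⟨L0, fun L hL => ?_⟩
  obtain ⟨E, h1, h2, h3⟩ := h L hL
  refine ⟨E, h1, h2, fun x => ?_⟩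
  obtain ⟨l, hl, h4⟩ := h3 x
  refine ⟨l, hl, h4.trans ?_⟩
  have : vis T (∅ : Set X) L x = 0 := by simp [vis]
  rw [this]; simp

/-- `μ` is covered at exponential rate `a` up to Hamming error rate `θ`. -/
def HamCov [MeasurableSpace X] (μ : Measure X) (a θ : ℝ) : Prop :=
  ∀ η > 0, ∃ L0 : ℕ, ∀ L ≥ L0, ∃ E : Finset (List ι), (∀ l ∈ E, l.length = L) ∧
    (E.card : ℝ) ≤ Real.exp ((a + η) * L) ∧ μ.real (good T U E ((θ + η) * L))ᶜ ≤ η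

variable [MeasurableSpace X] 

lemma hamCov_one (d0 : ι) (μ : Measure X) (a : ℝ) (ha : 0 ≤ a) : HamCov T U μ a 1 := by
  intro η hη
  refine ⟨0, fun L _ => ⟨{List.replicate L d0}, by simp, ?_, ?_⟩⟩
  · simp; positivity
  · have : good T U {List.replicate L d0} ((1 + η) * L) = univ := by
      ext x
      simp only [good, Finset.mem_singleton, exists_eq_left, mem_ofPred_eq, mem_univ, iff_true]
      have h1 := mism_le_length T U (List.replicate L d0) x
      rw [List.length_replicate] at h1
      have h1' : (mism T U x (List.replicate L d0) : ℝ) ≤ L := by exact_mod_cast h1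
      have : (0:ℝ) ≤ η * L := by positivity
      linarith
    rw [this]; simp; exact hη.le

variable [TopologicalSpace X] [BorelSpace X]

set_option maxHeartbeats 1000000 in
lemma hamCov_step (hTc : Continuous T) (hU : ∀ d, IsOpen (U d)) (d0 : ι) (μ : Measure X)
    [IsProbabilityMeasure μ] (hT : Ergodic T μ) (a θ δ : ℝ) (ha : 0 ≤ a) (hθ : 0 ≤ θ)
    (hδ : 0 < δ) (hδ1 : δ < 1)
    (hk : ∃ᶠ m : ℕ in atTop, ∃ Em : Finset (List ι), (∀ l ∈ Em, l.length = m) ∧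
      (Em.card : ℝ) ≤ Real.exp (a * m) ∧ δ < μ.real (good T U Em 0))
    (h : HamCov T U μ a θ) : HamCov T U μ a ((1 - δ) * θ) := by
  intro η hη
  set e := η / 8 with he
  have hepos : 0 < e := by positivity
  set η1 := min (e ^ 2) e with hη1
  have hη1pos : 0 < η1 := by positivity
  have hη1a : η1 ≤ e ^ 2 := min_le_left _ _
  have hη1b : η1 ≤ e := min_le_right _ _
  obtain ⟨n0, hn0, hn0'⟩ := exp_small (η / 4) (by positivity)
  obtain ⟨L1, hL1⟩ := h η1 hη1pos
  set n := max n0 L1 with hn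
  obtain ⟨En, hEn, hcn, hGn⟩ := hL1 n (le_max_right _ _)
  obtain ⟨M, hM⟩ := exists_nat_ge (max (n:ℝ) (n / (η / 4 / 2)))
  obtain ⟨m, hm, Em, hEm, hcm, hWm⟩ := frequently_atTop.1 hk M
  have hmM : (M:ℝ) ≤ m := by exact_mod_cast hm
  have hm1 : n ≤ m := by
    have : (n:ℝ) ≤ m := (le_max_left _ _).trans (hM.trans hmM)
    exact_mod_cast this
  have hm2 : (n : ℝ) / (η / 4 / 2) ≤ m := (le_max_right _ _).trans (hM.trans hmM)
  have hmpos : (0:ℝ) < m := by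
    have : 0 < m := by omega
    exact_mod_cast this
  have hm3 : (n / m : ℝ) ≤ η / 4 / 2 := by
    rw [div_le_iff₀ hmpos]
    rw [div_le_iff₀ (by positivity)] at hm2
    linarith
  obtain ⟨L2, hL2⟩ := block2 T U d0 a (η / 4) (θ + η1) ha (by positivity) (by positivity) m n n0
    hn0 hn0' (le_max_left _ _) hm1 hm3 Em En hEm hEn hcm
    (hcn.trans (Real.exp_le_exp.2 (by gcongr; linarith)))
    (good T U Em 0) (good T U En ((θ + η1) * n))
    (by
      rintro x ⟨l, hl, hx⟩
      exact ⟨l, hl, by exact_mod_cast (le_antisymm hx (by positivity))⟩) (fun x hx => hx)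
  obtain ⟨L3, hL3⟩ := ergodic_vis T hT (isOpen_good T U hTc hU Em 0).measurableSet δ e hWm hepos
  refine ⟨max (max L2 L3) 1, fun L hL => ?_⟩
  simp only [ge_iff_le, max_le_iff] at hL
  obtain ⟨E, hE, hc, hx⟩ := hL2 L hL.1.1
  refine ⟨E, hE, hc.trans (Real.exp_le_exp.2 (by gcongr; linarith)), ?_⟩
  have b1 := hL3 L hL.1.2
  have b2 := markov_vis T hT.toMeasurePreserving
    (isOpen_good T U hTc hU En ((θ + η1) * n)).measurableSet.compl e hepos (hGn.trans hη1a) L hL.2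
  calc μ.real (good T U E (((1 - δ) * θ + η) * L))ᶜ
      ≤ μ.real ({x | (vis T (good T U Em 0) L x : ℝ) ≤ δ * L} ∪
        {x | e * L < vis T (good T U En ((θ + η1) * n))ᶜ L x}) := by
        refine measureReal_mono ?_ (measure_ne_top _ _)
        intro x hxx
        by_contra hcon
        simp only [mem_union, mem_ofPred_eq, not_or, not_le, not_lt] at hcon
        apply hxx
        obtain ⟨l, hl, h1⟩ := hx x
        refine ⟨l, hl, h1.trans ?_⟩
        obtain ⟨c1, c2⟩ := hcon
        have hLpos : (0:ℝ) ≤ L := by positivity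
        have c3 : (θ + η1) * (L - vis T (good T U Em 0) L x) ≤ (θ + η1) * (L - δ * L) := by
          gcongr
        have c4 : η1 * (L - δ * L) ≤ e * L := by
          have : (L - δ * L : ℝ) ≤ L := by nlinarith
          have h0 : 0 ≤ (L - δ * L : ℝ) := by nlinarith
          nlinarith
        have c5 : e = η / 8 := he
        have c6 : 0 ≤ η * L := by positivity
        rw [c5] at c2 c4
        linarith
    _ ≤ e + e := (measureReal_union_le _ _).trans (add_le_add b1 b2)
    _ ≤ η := by rw [he]; linarith

lemma hamCov_ergodic (hTc : Continuous T) (hU : ∀ d, IsOpen (U d)) (d0 : ι) (μ : Measure X)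
    [IsProbabilityMeasure μ] (hT : Ergodic T μ) (a δ : ℝ) (ha : 0 ≤ a)
    (hδ : 0 < δ) (hδ1 : δ < 1)
    (hk : ∃ᶠ m : ℕ in atTop, ∃ Em : Finset (List ι), (∀ l ∈ Em, l.length = m) ∧
      (Em.card : ℝ) ≤ Real.exp (a * m) ∧ δ < μ.real (good T U Em 0)) :
    HamCov T U μ a 0 := by
  have h1 : ∀ k : ℕ, HamCov T U μ a ((1 - δ) ^ k) := by
    intro k
    induction k with
    | zero => simpa using hamCov_one T U d0 μ a ha
    | succ k ih =>
      rw [pow_succ']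
      exact hamCov_step T U hTc hU d0 μ hT a _ δ ha (pow_nonneg (by linarith) k) hδ hδ1 hk ih
  intro η hη
  obtain ⟨k, hk⟩ := exists_pow_lt_of_lt_one (show 0 < η / 2 by positivity)
    (show 1 - δ < 1 by linarith)
  obtain ⟨L0, h⟩ := h1 k (η / 2) (by positivity)
  refine ⟨L0, fun L hL => ?_⟩
  obtain ⟨E, hE, hc, hx⟩ := h L hL
  refine ⟨E, hE, hc.trans (Real.exp_le_exp.2 (by gcongr; linarith)), ?_⟩
  calc _ ≤ μ.real (good T U E (((1 - δ) ^ k + η / 2) * L))ᶜ := by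
        refine measureReal_mono ?_ (measure_ne_top _ _)
        apply compl_subset_compl.2
        rintro x ⟨l, hl, h⟩
        refine ⟨l, hl, h.trans ?_⟩
        apply mul_le_mul_of_nonneg_right _ (by positivity)
        linarith
    _ ≤ η := by linarith

open ProbabilityTheory MeasurableSpace in
lemma hamCov_invariant [Countable ι] [StandardBorelSpace X] (hTc : Continuous T) (hU : ∀ d, IsOpen (U d))
    (d0 : ι) (a : ℝ) (ha : 0 ≤ a)
    (herg : ∀ ν : Measure X, IsProbabilityMeasure ν → Ergodic T ν → HamCov T U ν a 0)
    (μ : Measure X) [IsProbabilityMeasure μ] (hT : MeasurePreserving T μ μ) :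
    HamCov T U μ a 0 := by
  classical
  intro η hη
  set e := η / 8 with he
  have hepos : 0 < e := by positivity
  set η1 := min (e ^ 2) e with hη1
  have hη1pos : 0 < η1 := by positivity
  have hη1a : η1 ≤ e ^ 2 := min_le_left _ _
  have hη1b : η1 ≤ e := min_le_right _ _
  obtain ⟨n0, hn0, hn0'⟩ := exp_small (η / 2) (by positivity)
  set κ := condExpKernel μ (invariants T) with hκ
  let C := {c : ℕ × Finset (List ι) // n0 ≤ c.1 ∧ (∀ l ∈ c.2, l.length = c.1) ∧
    (c.2.card : ℝ) ≤ Real.exp ((a + η / 2 / 2) * c.1)}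
  let G : C → Set X := fun c => good T U c.1.2 (η1 * c.1.1)
  have hGm : ∀ c, MeasurableSet (G c) := fun c => (isOpen_good T U hTc hU _ _).measurableSet
  let Y : C → Set X := fun c => {y | κ y (G c)ᶜ ≤ ENNReal.ofReal η1}
  have hYm : ∀ c, MeasurableSet (Y c) := fun c =>
    measurableSet_le (ed_meas T (hGm c).compl) measurable_const
  have hfull : μ (⋃ c, Y c) = 1 := by
    rw [← measure_univ (μ := μ)]
    apply measure_congr
    apply ae_eq_univ.2
    have : ∀ᵐ y ∂μ, y ∈ ⋃ c, Y c := by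
      filter_upwards [ergodic_decomp T hT] with y hy
      obtain ⟨L0, h⟩ := herg (κ y) inferInstance hy η1 hη1pos
      obtain ⟨E, h1, h2, h3⟩ := h (max L0 n0) (le_max_left _ _)
      refine mem_iUnion.2 ⟨⟨⟨max L0 n0, E⟩, le_max_right _ _, h1, h2.trans ?_⟩, ?_⟩
      · apply Real.exp_le_exp.2
        gcongr
        linarith
      · change κ y (good T U E (η1 * ((max L0 n0 : ℕ) : ℝ)))ᶜ ≤ ENNReal.ofReal η1
        rw [zero_add] at h3
        rw [ENNReal.le_ofReal_iff_toReal_le (measure_ne_top _ _) hη1pos.le]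
        exact h3
    exact this
  obtain ⟨J, hJ⟩ : ∃ J : Finset C, μ (⋃ c ∈ J, Y c)ᶜ ≤ ENNReal.ofReal e := by
    have h1 : (⋃ c, Y c) = ⋃ J : Finset C, ⋃ c ∈ J, Y c := by
      ext y; simp only [mem_iUnion]
      exact ⟨fun ⟨c, h⟩ => ⟨{c}, c, by simp, h⟩, fun ⟨_, c, _, h⟩ => ⟨c, h⟩⟩
    rw [h1, Directed.measure_iUnion] at hfull
    · have h2 : (1 - ENNReal.ofReal e) < ⨆ J : Finset C, μ (⋃ c ∈ J, Y c) := by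
        rw [hfull]
        exact ENNReal.sub_lt_self ENNReal.one_ne_top one_ne_zero (by simpa using hepos)
      obtain ⟨J, hJ⟩ := lt_iSup_iff.1 h2
      refine ⟨J, ?_⟩
      rw [prob_compl_eq_one_sub (Finset.measurableSet_biUnion _ fun c _ => hYm c)]
      rw [tsub_le_iff_left]
      have := hJ.le
      rw [tsub_le_iff_right] at this
      exact this
    · intro J1 J2
      exact ⟨J1 ∪ J2, biUnion_subset_biUnion_left (by simp),
        biUnion_subset_biUnion_left (by simp)⟩
  have hb : ∀ c : C, ∃ L0 : ℕ, ∀ L ≥ L0, ∃ E : Finset (List ι), (∀ l ∈ E, l.length = L) ∧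
      (E.card : ℝ) ≤ Real.exp ((a + η / 2) * L) ∧
      ∀ x, ∃ l ∈ E, (mism T U x l : ℝ) ≤ η1 * L + vis T (G c)ᶜ L x + η / 2 * L := fun c =>
    block1 T U d0 a (η / 2) η1 ha (by positivity) hη1pos.le c.1.1 n0 hn0 hn0' c.2.1 c.1.2 c.2.2.1
      c.2.2.2
  choose L0 hL0 using hb
  obtain ⟨L4, hL4⟩ := exists_nat_ge (Real.log (J.card + 1) / (η / 2))
  refine ⟨max (max (J.sup L0) L4) 1, fun L hL => ?_⟩
  simp only [ge_iff_le, max_le_iff] at hL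
  have hLc : ∀ c ∈ J, L0 c ≤ L := fun c hc => (Finset.le_sup hc).trans hL.1.1
  let F : C → Finset (List ι) := fun c => if h : L0 c ≤ L then (hL0 c L h).choose else ∅
  have hF : ∀ c ∈ J, (∀ l ∈ F c, l.length = L) ∧
      ((F c).card : ℝ) ≤ Real.exp ((a + η / 2) * L) ∧
      ∀ x, ∃ l ∈ F c, (mism T U x l : ℝ) ≤ η1 * L + vis T (G c)ᶜ L x + η / 2 * L := by
    intro c hc
    simp only [F, dif_pos (hLc c hc)]
    exact (hL0 c L (hLc c hc)).choose_spec
  refine ⟨J.biUnion F, ?_, ?_, ?_⟩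
  · intro l hl
    obtain ⟨c, hc, hl⟩ := Finset.mem_biUnion.1 hl
    exact (hF c hc).1 l hl
  · have h1 : ((J.biUnion F).card : ℝ) ≤ ∑ c ∈ J, ((F c).card : ℝ) := by
      exact_mod_cast Finset.card_biUnion_le
    have h2 : ∑ c ∈ J, ((F c).card : ℝ) ≤ J.card * Real.exp ((a + η / 2) * L) := by
      rw [← nsmul_eq_mul]
      exact Finset.sum_le_card_nsmul _ _ _ fun c hc => (hF c hc).2.1
    have h3 : (J.card : ℝ) ≤ Real.exp (η / 2 * L) := by
      have hLr : (L4 : ℝ) ≤ L := by exact_mod_cast hL.1.2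
      rw [div_le_iff₀ (by positivity)] at hL4
      calc (J.card : ℝ) ≤ J.card + 1 := by linarith
        _ = Real.exp (Real.log (J.card + 1)) := (Real.exp_log (by positivity)).symm
        _ ≤ _ := Real.exp_le_exp.2 (by nlinarith)
    calc _ ≤ _ := h1
      _ ≤ _ := h2
      _ ≤ Real.exp (η / 2 * L) * Real.exp ((a + η / 2) * L) := by gcongr
      _ = _ := by rw [← Real.exp_add]; congr 1; ring
  · set B : Set X := ⋂ c ∈ J, {x | e * L < vis T (G c)ᶜ L x} with hB
    have hBm : MeasurableSet B := by
      apply Finset.measurableSet_biInter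
      intro c _
      apply measurableSet_lt measurable_const
      exact measurable_from_top.comp (measurable_vis T hTc.measurable (hGm c).compl L)
    have hBμ : μ B ≤ ENNReal.ofReal e + ENNReal.ofReal e := by
      rw [ed_mix T hBm]
      calc ∫⁻ y, κ y B ∂μ ≤ ∫⁻ y, (ENNReal.ofReal e +
            ((⋃ c ∈ J, Y c)ᶜ).indicator (fun _ => (1:ENNReal)) y) ∂μ := by
            apply lintegral_mono_ae
            filter_upwards [ed_invariant T hT] with y hy
            by_cases hyY : y ∈ ⋃ c ∈ J, Y c
            · obtain ⟨c, hc, hyc⟩ := mem_iUnion₂.1 hyY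
              refine le_trans ?_ le_self_add
              have h1 : (κ y).real (G c)ᶜ ≤ e ^ 2 := by
                refine le_trans ?_ hη1a
                exact ENNReal.toReal_le_of_le_ofReal hη1pos.le hyc
              have h2 := markov_vis T hy (hGm c).compl e hepos h1 L hL.2
              rw [ENNReal.le_ofReal_iff_toReal_le (measure_ne_top _ _) hepos.le]
              refine le_trans ?_ h2
              exact measureReal_mono (biInter_subset_of_mem hc)
            · rw [indicator_of_mem hyY]
              exact prob_le_one.trans le_add_self
        _ = ENNReal.ofReal e + μ (⋃ c ∈ J, Y c)ᶜ := by
            rw [lintegral_add_left measurable_const, lintegral_indicator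
              (Finset.measurableSet_biUnion _ fun c _ => hYm c).compl]
            simp
        _ ≤ _ := by gcongr
    rw [← ENNReal.ofReal_add hepos.le hepos.le] at hBμ
    have hBr : μ.real B ≤ e + e := ENNReal.toReal_le_of_le_ofReal (by positivity) hBμ
    calc _ ≤ μ.real B := by
          refine measureReal_mono ?_ (measure_ne_top _ _)
          intro x hx
          simp only [hB, mem_iInter]
          intro c hc
          by_contra hcon
          simp only [mem_ofPred_eq, not_lt] at hcon
          apply hx
          obtain ⟨l, hl, h⟩ := (hF c hc).2.2 x
          refine ⟨l, Finset.mem_biUnion.2 ⟨c, hc, hl⟩, h.trans ?_⟩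
          have hLpos : (0:ℝ) ≤ L := by positivity
          have : η1 * L ≤ e * L := by gcongr
          rw [he] at this hcon
          have : 0 ≤ η * L := by positivity
          linarith
      _ ≤ e + e := hBr
      _ ≤ η := by rw [he]; linarith

end Ham

section Glob
open BoundedContinuousFunction

variable {X : Type*} [MetricSpace X] [CompactSpace X] [MeasurableSpace X] [BorelSpace X] (T : X → X)

/-- Empirical measure of length `n+1`. -/
noncomputable def empM (n : ℕ) (x : X) : Measure X :=
  ((n + 1 : ℕ) : ENNReal)⁻¹ • ∑ k ∈ Finset.range (n + 1), Measure.dirac (T^[k] x)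

instance empM_prob (n : ℕ) (x : X) : IsProbabilityMeasure (empM T n x) := by
  constructor
  simp only [empM, Measure.smul_apply, Measure.finsetSum_apply, measure_univ, Finset.sum_const,
    Finset.card_range, smul_eq_mul, nsmul_eq_mul, mul_one]
  exact ENNReal.inv_mul_cancel (by simp) (by finiteness)

/-- Empirical measure as a probability measure. -/
noncomputable def emp (n : ℕ) (x : X) : ProbabilityMeasure X := ⟨empM T n x, empM_prob T n x⟩

lemma emp_apply (n : ℕ) (x : X) {S : Set X} (hS : MeasurableSet S) :
    (empM T n x) S = ((n + 1 : ℕ) : ENNReal)⁻¹ * (vis T S (n + 1) x : ENNReal) := by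
  classical
  simp only [empM, Measure.smul_apply, Measure.finsetSum_apply, smul_eq_mul, vis]
  congr 1
  push_cast
  apply Finset.sum_congr rfl
  intro k _
  rw [Measure.dirac_apply' _ hS]
  simp [Set.indicator_apply]

lemma emp_integral (n : ℕ) (x : X) (f : X →ᵇ ℝ) :
    ∫ y, f y ∂(empM T n x) = ((n + 1 : ℕ) : ℝ)⁻¹ * ∑ k ∈ Finset.range (n + 1), f (T^[k] x) := by
  rw [empM, integral_smul_measure, integral_finsetSum_measure]
  · simp only [integral_dirac, smul_eq_mul]
    congr 1
    rw [ENNReal.toReal_inv, ENNReal.toReal_natCast]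
  · intro i _
    exact f.integrable _

/-- Invariant probability measures. -/
def InvP (hT : Continuous T) : Set (ProbabilityMeasure X) :=
  {ν | ∀ f : X →ᵇ ℝ, ∫ y, (f.compContinuous ⟨T, hT⟩) y ∂(ν : Measure X) = ∫ y, f y ∂(ν : Measure X)}

lemma isClosed_InvP (hT : Continuous T) : IsClosed (InvP T hT) := by
  have : InvP T hT = ⋂ f : X →ᵇ ℝ, {ν : ProbabilityMeasure X |
      ∫ y, (f.compContinuous ⟨T, hT⟩) y ∂(ν : Measure X) = ∫ y, f y ∂(ν : Measure X)} := by
    ext ν; simp [InvP]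
  rw [this]
  apply isClosed_iInter
  intro f
  exact isClosed_eq (ProbabilityMeasure.continuous_integral_boundedContinuousFunction _)
    (ProbabilityMeasure.continuous_integral_boundedContinuousFunction _)

lemma InvP_mp (hT : Continuous T) {ν : ProbabilityMeasure X} (h : ν ∈ InvP T hT) :
    MeasurePreserving T (ν : Measure X) (ν : Measure X) := by
  refine ⟨hT.measurable, ?_⟩
  have : IsProbabilityMeasure (Measure.map T (ν : Measure X)) :=
    Measure.isProbabilityMeasure_map hT.aemeasurable
  apply ext_of_forall_integral_eq_of_IsFiniteMeasure
  intro f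
  rw [integral_map hT.aemeasurable f.continuous.aestronglyMeasurable]
  exact h f

lemma emp_diff (hT : Continuous T) (n : ℕ) (x : X) (f : X →ᵇ ℝ) :
    |∫ y, (f.compContinuous ⟨T, hT⟩) y ∂(empM T n x) - ∫ y, f y ∂(empM T n x)| ≤
      2 * ‖f‖ * ((n + 1 : ℕ) : ℝ)⁻¹ := by
  rw [emp_integral, emp_integral, ← mul_sub, ← Finset.sum_sub_distrib]
  have h1 : ∀ k, (f.compContinuous ⟨T, hT⟩) (T^[k] x) = f (T^[k + 1] x) := by
    intro k
    rw [Function.iterate_succ_apply']; rfl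
  simp only [h1]
  rw [Finset.sum_range_sub (fun k => f (T^[k] x)), abs_mul, abs_of_nonneg (by positivity), mul_comm]
  gcongr
  have h2 := f.norm_coe_le_norm (T^[n+1] x)
  have h3 := f.norm_coe_le_norm (T^[0] x)
  rw [Real.norm_eq_abs] at h2 h3
  rw [abs_le] at *
  constructor <;> linarith

lemma emp_near (hT : Continuous T) (O : Set (ProbabilityMeasure X)) (hO : IsOpen O)
    (hinv : InvP T hT ⊆ O) : ∃ N0, ∀ n ≥ N0, ∀ x, emp T n x ∈ O := by
  by_contra! hcon
  choose n hn x hx using hcon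
  let u : Ultrafilter ℕ := Ultrafilter.of atTop
  have hu : (u : Filter ℕ) ≤ atTop := Ultrafilter.of_le _
  let s : ℕ → ProbabilityMeasure X := fun k => emp T (n k) (x k)
  have : Nonempty (ProbabilityMeasure X) := ⟨s 0⟩
  have hlim : Tendsto s u (𝓝 (u.map s).lim) := (u.map s).le_nhds_lim
  set ν := (u.map s).lim with hν
  have h1 : ν ∈ Oᶜ := hO.isClosed_compl.mem_of_tendsto hlim (Eventually.of_forall hx)
  apply h1
  apply hinv
  intro f
  have h2 := ((ProbabilityMeasure.continuous_integral_boundedContinuousFunction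
    (f.compContinuous ⟨T, hT⟩)).tendsto ν).comp hlim
  have h3 := ((ProbabilityMeasure.continuous_integral_boundedContinuousFunction f).tendsto ν).comp hlim
  have h4 := h2.sub h3
  have h5 : Tendsto (fun k : ℕ => 2 * ‖f‖ * ((k + 1 : ℕ) : ℝ)⁻¹) atTop (𝓝 0) := by
    have : Tendsto (fun k : ℕ => ((k + 1 : ℕ) : ℝ)⁻¹) atTop (𝓝 0) :=
      (tendsto_inv_atTop_nhds_zero_nat (𝕜 := ℝ)).comp (tendsto_add_atTop_nat 1)
    simpa using this.const_mul (2 * ‖f‖)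
  have h6 := squeeze_zero_norm' (f := fun k => (∫ y, (f.compContinuous ⟨T, hT⟩) y ∂(s k : Measure X)) -
      ∫ y, f y ∂(s k : Measure X)) (a := fun k : ℕ => 2 * ‖f‖ * ((k + 1 : ℕ) : ℝ)⁻¹) (t₀ := (u : Filter ℕ))
      (Eventually.of_forall fun k => by
        refine (emp_diff T hT (n k) (x k) f).trans ?_
        have := hn k
        gcongr) (h5.mono_left hu)
  exact sub_eq_zero.1 (tendsto_nhds_unique h4 h6)

lemma exists_ergodic [Nonempty X] (hT : Continuous T) :
    ∃ μ : Measure X, IsProbabilityMeasure μ ∧ Ergodic T μ := by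
  have h : (InvP T hT).Nonempty := by
    by_contra! h
    obtain ⟨N, hN⟩ := emp_near T hT ∅ isOpen_empty h.subset
    exact hN N le_rfl (Classical.arbitrary X)
  obtain ⟨ν, hν⟩ := h
  obtain ⟨y, hy⟩ := (ergodic_decomp T (InvP_mp T hT hν)).exists
  exact ⟨_, inferInstance, hy⟩

lemma isOpen_lt_closed {F : Set X} (hF : IsClosed F) (c : ENNReal) :
    IsOpen {ν : ProbabilityMeasure X | (ν : Measure X) F < c} := by
  rw [← isClosed_compl_iff, isClosed_iff_ultrafilter]
  intro ν u hu hs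
  have h1 := ProbabilityMeasure.limsup_measure_closed_le_of_tendsto (μs := id) (L := (u : Filter _))
    (tendsto_id.mono_left hu) hF
  simp only [mem_compl_iff, mem_ofPred_eq, not_lt] at *
  refine le_trans ?_ h1
  apply le_limsup_of_frequently_le
  · apply Eventually.frequently
    filter_upwards [hs] with ν' h
    simpa using h
  · isBoundedDefault

lemma globalize {ι : Type*} (U : ι → Set X) [Fintype ι] (hcov : ∀ x, ∃ d, x ∈ U d)
    (hT : Continuous T) (hU : ∀ d, IsOpen (U d)) (d0 : ι) (a : ℝ) (ha : 0 ≤ a)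
    (hinv : ∀ ν : Measure X, IsProbabilityMeasure ν → MeasurePreserving T ν ν → HamCov T U ν a 0)
    (η : ℝ) (hη : 0 < η) : ∃ N0 : ℕ, ∀ N ≥ N0, ∃ Q : Finset (List ι), (∀ l ∈ Q, l.length = N) ∧
      (Q.card : ℝ) ≤ Real.exp ((a + η) * N) ∧ ∀ x, ∃ q ∈ Q, mism T U x q = 0 := by
  classical
  have hι : (0:ℝ) < Fintype.card ι := by
    have : 0 < Fintype.card ι := Fintype.card_pos_iff.2 ⟨d0⟩
    exact_mod_cast this
  set z : ℝ := min 1 (η / 8 / Fintype.card ι) with hz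
  have hz0 : 0 < z := by positivity
  have hz1 : z ≤ 1 := min_le_left _ _
  have hz2 : 1 + Fintype.card ι * z ≤ Real.exp (η / 8) := by
    have : z ≤ η / 8 / Fintype.card ι := min_le_right _ _
    rw [le_div_iff₀ hι] at this
    have h2 := Real.add_one_le_exp (η / 8)
    linarith
  set Λ := Real.log (1 / z) with hΛ
  have hΛ0 : 0 ≤ Λ := Real.log_nonneg (by rw [le_div_iff₀ hz0]; linarith)
  set σ := η / 8 / (Λ + 1) with hσ
  have hσ0 : 0 < σ := by positivity
  have hσΛ : σ * Λ ≤ η / 8 := by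
    rw [hσ, div_mul_eq_mul_div, div_le_iff₀ (by positivity)]
    nlinarith
  set β := min (η / 4) (σ / 4) with hβ
  have hβ0 : 0 < β := by positivity
  have hβ1 : β ≤ η / 4 := min_le_left _ _
  have hβ2 : β ≤ σ / 4 := min_le_right _ _
  obtain ⟨n0, hn0, hn0'⟩ := exp_small β hβ0
  let C := {c : ℕ × Finset (List ι) // n0 ≤ c.1 ∧ (∀ l ∈ c.2, l.length = c.1) ∧
    (c.2.card : ℝ) ≤ Real.exp ((a + β / 2) * c.1)}
  let G : C → Set X := fun c => good T U c.1.2 (β / 2 * c.1.1)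
  have hGo : ∀ c, IsOpen (G c) := fun c => isOpen_good T U hT hU _ _
  let O : C → Set (ProbabilityMeasure X) := fun c => {ν | (ν : Measure X) (G c)ᶜ < ENNReal.ofReal β}
  have hOo : ∀ c, IsOpen (O c) := fun c => isOpen_lt_closed (hGo c).isClosed_compl _
  have hcovO : InvP T hT ⊆ ⋃ c, O c := by
    intro ν hν
    obtain ⟨L0, h⟩ := hinv ν inferInstance (InvP_mp T hT hν) (β / 2) (by positivity)
    obtain ⟨E, h1, h2, h3⟩ := h (max L0 n0) (le_max_left _ _)
    refine mem_iUnion.2 ⟨⟨⟨max L0 n0, E⟩, le_max_right _ _, h1, h2⟩, ?_⟩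
    change (ν : Measure X) (good T U E (β / 2 * ((max L0 n0 : ℕ) : ℝ)))ᶜ < ENNReal.ofReal β
    rw [zero_add] at h3
    rw [ENNReal.lt_ofReal_iff_toReal_lt (measure_ne_top _ _)]
    exact lt_of_le_of_lt h3 (by linarith)
  obtain ⟨J, hJ⟩ := (isClosed_InvP T hT).isCompact.elim_finite_subcover O hOo hcovO
  obtain ⟨N1, hN1⟩ := emp_near T hT (⋃ c ∈ J, O c)
    (isOpen_biUnion fun c _ => hOo c) hJ
  have hb : ∀ c : C, ∃ L0 : ℕ, ∀ L ≥ L0, ∃ E : Finset (List ι), (∀ l ∈ E, l.length = L) ∧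
      (E.card : ℝ) ≤ Real.exp ((a + β) * L) ∧
      ∀ x, ∃ l ∈ E, (mism T U x l : ℝ) ≤ β / 2 * L + vis T (G c)ᶜ L x + β * L := fun c =>
    block1 T U d0 a β (β / 2) ha hβ0 (by positivity) c.1.1 n0 hn0 hn0' c.2.1 c.1.2 c.2.2.1
      c.2.2.2
  choose L0 hL0 using hb
  obtain ⟨L4, hL4⟩ := exists_nat_ge (Real.log (J.card + 1) / (η / 4))
  refine ⟨max (max (J.sup L0) L4) (N1 + 1), fun L hL => ?_⟩
  simp only [ge_iff_le, max_le_iff] at hL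
  have hLc : ∀ c ∈ J, L0 c ≤ L := fun c hc => (Finset.le_sup hc).trans hL.1.1
  let F : C → Finset (List ι) := fun c => if h : L0 c ≤ L then (hL0 c L h).choose else ∅
  have hF : ∀ c ∈ J, (∀ l ∈ F c, l.length = L) ∧
      ((F c).card : ℝ) ≤ Real.exp ((a + β) * L) ∧
      ∀ x, ∃ l ∈ F c, (mism T U x l : ℝ) ≤ β / 2 * L + vis T (G c)ᶜ L x + β * L := by
    intro c hc
    simp only [F, dif_pos (hLc c hc)]
    exact (hL0 c L (hLc c hc)).choose_spec
  have hcorr := fun l => corr_exists T U hcov z hz0 hz1 l ⌊σ * L⌋₊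
  choose K hK1 hK2 hK3 using hcorr
  have hLr0 : (0:ℝ) ≤ L := by positivity
  have hKc : ∀ l : List ι, l.length = L → ((K l).card : ℝ) ≤ Real.exp (η / 4 * L) := by
    intro l hl
    refine (hK2 l).trans ?_
    rw [hl]
    have e1 : (1 / z) ^ ⌊σ * L⌋₊ ≤ Real.exp (η / 8 * L) := by
      rw [← Real.exp_log (show 0 < 1 / z by positivity), ← Real.exp_nat_mul]
      apply Real.exp_le_exp.2
      have := Nat.floor_le (show 0 ≤ σ * L by positivity)
      calc (⌊σ * L⌋₊ : ℝ) * Λ ≤ σ * L * Λ := by gcongr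
        _ = σ * Λ * L := by ring
        _ ≤ _ := by gcongr
    have e2 : (1 + Fintype.card ι * z) ^ L ≤ Real.exp (η / 8 * L) := by
      calc (1 + Fintype.card ι * z) ^ L ≤ Real.exp (η / 8) ^ L := by gcongr
        _ = _ := by rw [← Real.exp_nat_mul]; congr 1; ring
    calc _ ≤ Real.exp (η / 8 * L) * Real.exp (η / 8 * L) := by gcongr
      _ = _ := by rw [← Real.exp_add]; congr 1; ring
  refine ⟨J.biUnion fun c => (F c).biUnion K, ?_, ?_, ?_⟩
  · intro q hq
    obtain ⟨c, hc, hq⟩ := Finset.mem_biUnion.1 hq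
    obtain ⟨l, hl, hq⟩ := Finset.mem_biUnion.1 hq
    rw [hK1 l q hq, (hF c hc).1 l hl]
  · have h0 : ∀ c ∈ J, (((F c).biUnion K).card : ℝ) ≤
        Real.exp ((a + β) * L) * Real.exp (η / 4 * L) := by
      intro c hc
      have h1 : (((F c).biUnion K).card : ℝ) ≤ ∑ l ∈ F c, ((K l).card : ℝ) := by
        exact_mod_cast Finset.card_biUnion_le
      have h2 : ∑ l ∈ F c, ((K l).card : ℝ) ≤ (F c).card * Real.exp (η / 4 * L) := by
        rw [← nsmul_eq_mul]
        exact Finset.sum_le_card_nsmul _ _ _ fun l hl => hKc l ((hF c hc).1 l hl)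
      refine h1.trans (h2.trans ?_)
      have := (hF c hc).2.1
      gcongr
    have h1 : ((J.biUnion fun c => (F c).biUnion K).card : ℝ) ≤
        ∑ c ∈ J, (((F c).biUnion K).card : ℝ) := by
      exact_mod_cast Finset.card_biUnion_le
    have h2 : ∑ c ∈ J, (((F c).biUnion K).card : ℝ) ≤
        J.card * (Real.exp ((a + β) * L) * Real.exp (η / 4 * L)) := by
      rw [← nsmul_eq_mul]
      exact Finset.sum_le_card_nsmul _ _ _ h0
    have h3 : (J.card : ℝ) ≤ Real.exp (η / 4 * L) := by
      have hLr : (L4 : ℝ) ≤ L := by exact_mod_cast hL.1.2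
      rw [div_le_iff₀ (by positivity)] at hL4
      calc (J.card : ℝ) ≤ J.card + 1 := by linarith
        _ = Real.exp (Real.log (J.card + 1)) := (Real.exp_log (by positivity)).symm
        _ ≤ _ := Real.exp_le_exp.2 (by nlinarith)
    calc _ ≤ _ := h1
      _ ≤ _ := h2
      _ ≤ Real.exp (η / 4 * L) * (Real.exp ((a + β) * L) * Real.exp (η / 4 * L)) := by gcongr
      _ = Real.exp (η / 4 * L + ((a + β) * L + η / 4 * L)) := by rw [← Real.exp_add, ← Real.exp_add]
      _ ≤ _ := by
        apply Real.exp_le_exp.2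
        have : β * L ≤ η / 4 * L := by gcongr
        have : 0 ≤ η * L := by positivity
        linarith
  · intro x
    obtain ⟨n, rfl⟩ : ∃ n, L = n + 1 := ⟨L - 1, by omega⟩
    obtain ⟨c, hc, hxc⟩ := mem_iUnion₂.1 (hN1 n (by omega) x)
    have hv : (vis T (G c)ᶜ (n + 1) x : ℝ) ≤ β * (n + 1 : ℕ) := by
      have h1 : (empM T n x) (G c)ᶜ < ENNReal.ofReal β := hxc
      rw [ENNReal.lt_ofReal_iff_toReal_lt (measure_ne_top _ _),
        emp_apply T n x (hGo c).measurableSet.compl, ENNReal.toReal_mul, ENNReal.toReal_inv,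
        ENNReal.toReal_natCast, ENNReal.toReal_natCast, inv_mul_lt_iff₀ (by positivity)] at h1
      linarith
    obtain ⟨l, hl, h⟩ := (hF c hc).2.2 x
    have h2 : mism T U x l ≤ ⌊σ * (n + 1 : ℕ)⌋₊ := by
      apply Nat.le_floor
      refine h.trans ?_
      have : β * (n + 1 : ℕ) ≤ σ / 4 * (n + 1 : ℕ) := by gcongr
      have : 0 ≤ σ * (n + 1 : ℕ) := by positivity
      linarith
    obtain ⟨q, hq, h3⟩ := hK3 l x h2
    exact ⟨q, Finset.mem_biUnion.2 ⟨c, hc, Finset.mem_biUnion.2 ⟨l, hl, hq⟩⟩, h3⟩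

end Glob

section Fin6

lemma liminf_scale (f g : ℝ → EReal) (c : ℝ) (hc : 0 < c) (hg : ∀ ε > 0, 0 ≤ g ε)
    (h : ∀ ε > 0, f (c * ε) ≤ g ε) :
    liminf (fun ε : ℝ => f ε / ((Real.log (1 / ε) : ℝ) : EReal)) (𝓝[>] (0:ℝ)) ≤
    liminf (fun ε : ℝ => g ε / ((Real.log (1 / ε) : ℝ) : EReal)) (𝓝[>] (0:ℝ)) := by
  have hlog : Tendsto (fun ε : ℝ => Real.log (1 / ε)) (𝓝[>] (0:ℝ)) atTop := by
    simp only [one_div]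
    exact Real.tendsto_log_atTop.comp tendsto_inv_nhdsGT_zero
  have hpos : ∀ᶠ ε : ℝ in 𝓝[>] (0:ℝ), 0 < ε := eventually_mem_nhdsWithin
  have hscale : Tendsto (fun ε : ℝ => c * ε) (𝓝[>] (0:ℝ)) (𝓝[>] (0:ℝ)) := by
    apply tendsto_nhdsWithin_of_tendsto_nhds_of_eventually_within
    · have : Tendsto (fun ε : ℝ => c * ε) (𝓝 0) (𝓝 (c * 0)) := tendsto_id.const_mul c
      rw [mul_zero] at this
      exact this.mono_left nhdsWithin_le_nhds
    · filter_upwards [hpos] with ε hε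
      exact mul_pos hc hε
  apply EReal.ge_of_forall_gt_iff_ge.1
  intro b' hb'
  rcases le_or_gt b' 0 with hb0 | hb0
  · apply le_liminf_of_le
    · isBoundedDefault
    filter_upwards [hpos, hlog.eventually_gt_atTop 0] with ε hε hl
    calc ((b' : ℝ) : EReal) ≤ 0 := by exact_mod_cast hb0
      _ ≤ _ := EReal.div_nonneg (hg ε hε) (by exact_mod_cast hl.le)
  · obtain ⟨b, hb1, hb2⟩ := EReal.lt_iff_exists_real_btwn.1 hb'
    have hb1' : b' < b := by exact_mod_cast hb1
    have h1 := eventually_lt_of_lt_liminf hb2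
    have h2 := hscale.eventually h1
    have h3 := hscale.eventually (hlog.eventually_gt_atTop 0)
    apply le_liminf_of_le
    · isBoundedDefault
    filter_upwards [hpos, hlog.eventually_gt_atTop 0, h2, h3,
      hlog.eventually_ge_atTop (b * Real.log c / (b - b'))] with ε hε hl e1 e2 e3
    rw [EReal.le_div_iff_mul_le (by exact_mod_cast hl) (EReal.coe_ne_top _)]
    have e4 := (EReal.le_div_iff_mul_le (by exact_mod_cast e2) (EReal.coe_ne_top _)).1 e1.le
    refine le_trans ?_ (e4.trans (h ε hε))
    rw [← EReal.coe_mul, ← EReal.coe_mul, EReal.coe_le_coe_iff]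
    have e5 : Real.log (1 / (c * ε)) = Real.log (1 / ε) - Real.log c := by
      simp only [one_div, Real.log_inv]
      rw [Real.log_mul hc.ne' hε.ne']; ring
    rw [e5]
    rw [div_le_iff₀ (by linarith)] at e3
    linarith

variable {X : Type*} [MetricSpace X] (T : X → X)

lemma dist_le_dynDist (n : ℕ) (x y : X) (k : ℕ) (hk : k < n) :
    dist (T^[k] x) (T^[k] y) ≤ dynDist T n x y := by
  have hb : BddAbove (Set.range fun k => ⨆ (_ : k ∈ Finset.range n), dist (T^[k] x) (T^[k] y)) := by
    refine ⟨∑ k ∈ Finset.range n, dist (T^[k] x) (T^[k] y), ?_⟩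
    rintro _ ⟨k, rfl⟩
    apply Real.iSup_le
    · intro hk
      exact Finset.single_le_sum (f := fun k => dist (T^[k] x) (T^[k] y))
        (fun i _ => dist_nonneg) hk
    · exact Finset.sum_nonneg fun i _ => dist_nonneg
  have h1 := le_ciSup hb k
  refine le_trans ?_ h1
  have : k ∈ Finset.range n := Finset.mem_range.2 hk
  simp [hk]

lemma dynDist_le {n : ℕ} {x y : X} {r : ℝ} (hr : 0 ≤ r)
    (h : ∀ k < n, dist (T^[k] x) (T^[k] y) ≤ r) : dynDist T n x y ≤ r := by
  apply Real.iSup_le _ hr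
  intro k
  apply Real.iSup_le _ hr
  intro hk
  exact h k (Finset.mem_range.1 hk)

lemma dynDist_lt {n : ℕ} {x y : X} {r : ℝ} (hr : 0 < r)
    (h : ∀ k < n, dist (T^[k] x) (T^[k] y) < r) : dynDist T n x y < r := by
  rcases Nat.eq_zero_or_pos n with rfl | hn
  · exact lt_of_le_of_lt (dynDist_le T le_rfl (by simp)) hr
  · obtain ⟨k0, hk0, hm⟩ := Finset.exists_max_image (Finset.range n)
      (fun k => dist (T^[k] x) (T^[k] y)) ⟨0, Finset.mem_range.2 hn⟩
    refine lt_of_le_of_lt (dynDist_le T dist_nonneg ?_) (h k0 (Finset.mem_range.1 hk0))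
    intro k hk
    exact hm k (Finset.mem_range.2 hk)

lemma dynDist_comm (n : ℕ) (x y : X) : dynDist T n x y = dynDist T n y x := by
  simp only [dynDist, dist_comm]

lemma dynDist_triangle (n : ℕ) (x y z : X) :
    dynDist T n x z ≤ dynDist T n x y + dynDist T n y z := by
  have h0 : ∀ a b : X, 0 ≤ dynDist T n a b := fun a b =>
    Real.iSup_nonneg fun k => Real.iSup_nonneg fun _ => dist_nonneg
  apply dynDist_le T (add_nonneg (h0 _ _) (h0 _ _))
  intro k hk
  exact (dist_triangle _ (T^[k] y) _).trans
    (add_le_add (dist_le_dynDist T n x y k hk) (dist_le_dynDist T n y z k hk))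

variable [CompactSpace X]

lemma dyn_cover (hT : Continuous T) (n : ℕ) (r : ℝ) (hr : 0 < r) :
    ∃ F : Finset X, ∀ x, ∃ y ∈ F, dynDist T n y x < r := by
  have hn : ∀ y ∈ (univ : Set X), dynBall T n y r ∈ 𝓝 y := by
    intro y _
    have h1 : ∀ k ∈ Finset.range n, {x | dist (T^[k] y) (T^[k] x) < r} ∈ 𝓝 y := by
      intro k _
      apply IsOpen.mem_nhds
      · exact isOpen_lt (continuous_const.dist (hT.iterate k)) continuous_const
      · simpa using hr
    have h2 := (Filter.biInter_finset_mem (Finset.range n)).2 h1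
    filter_upwards [h2] with x hx
    apply dynDist_lt T hr
    intro k hk
    simp only [mem_iInter] at hx
    exact hx k (Finset.mem_range.2 hk)
  obtain ⟨F, _, hF⟩ := isCompact_univ.elim_nhds_subcover (fun y => dynBall T n y r) hn
  refine ⟨F, fun x => ?_⟩
  obtain ⟨y, hy, h⟩ := mem_iUnion₂.1 (hF (mem_univ x))
  exact ⟨y, hy, h⟩

lemma sepNum_le {n : ℕ} {r : ℝ} {α : Type*} (Q : Finset α) (p : X → α) (hp : ∀ x, p x ∈ Q)
    (h : ∀ x y, p x = p y → dynDist T n x y ≤ r) : ∀ m ∈ {m | ∃ E : Finset X, ↑E ⊆ (univ : Set X) ∧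
    (∀ x ∈ E, ∀ y ∈ E, x ≠ y → r < dynDist T n x y) ∧ E.card = m}, m ≤ Q.card := by
  rintro m ⟨E, -, hE, rfl⟩
  apply Finset.card_le_card_of_injOn p (fun x _ => hp x)
  intro x hx y hy hxy
  by_contra hne
  exact absurd (h x y hxy) (not_le.2 (hE x hx y hy hne))

lemma sep_max (hT : Continuous T) (n : ℕ) (r : ℝ) (hr : 0 < r) :
    ∃ E : Finset X, E.card = sepNum T n univ r ∧ ∀ x, ∃ y ∈ E, dynDist T n y x ≤ r := by
  classical
  obtain ⟨F, hF⟩ := dyn_cover T hT n (r / 2) (by positivity)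
  choose p hp hp' using hF
  have hbd := sepNum_le T (n := n) (r := r) F p hp (by
    intro x y hxy
    have h1 := hp' x
    have h2 := hp' y
    rw [← hxy] at h2
    rw [dynDist_comm] at h1
    have := dynDist_triangle T n x (p x) y
    linarith)
  set S := {m | ∃ E : Finset X, ↑E ⊆ (univ : Set X) ∧
    (∀ x ∈ E, ∀ y ∈ E, x ≠ y → r < dynDist T n x y) ∧ E.card = m} with hS
  have hne : S.Nonempty := ⟨0, ∅, by simp, by simp, by simp⟩
  have hbd' : BddAbove S := ⟨F.card, hbd⟩
  obtain ⟨E, hE1, hE2, hE3⟩ := Nat.sSup_mem hne hbd'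
  refine ⟨E, hE3, ?_⟩
  intro x
  by_contra! hcon
  have hx : x ∉ E := by
    intro hx
    have h1 := hcon x hx
    have h2 : dynDist T n x x ≤ r := dynDist_le T hr.le (by simp; intros; exact hr.le)
    linarith
  have : E.card + 1 ∈ S := by
    refine ⟨insert x E, by simp, ?_, Finset.card_insert_of_notMem hx⟩
    intro a ha b hb hab
    rcases Finset.mem_insert.1 ha with h1 | ha' <;> rcases Finset.mem_insert.1 hb with h2 | hb'
    · exact absurd (h1.trans h2.symm) hab
    · rw [dynDist_comm, h1]; exact hcon b hb'
    · rw [h2]; exact hcon a ha'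
    · exact hE2 a ha' b hb' hab
  have h3 := le_csSup hbd' this
  have h4 : E.card = sSup S := hE3
  omega

lemma sepEnt_nonneg (r : ℝ) : 0 ≤ sepEnt T univ r := by
  apply le_limsup_of_frequently_le
  · apply Eventually.frequently
    filter_upwards with n
    exact_mod_cast div_nonneg (Real.log_natCast_nonneg _) (Nat.cast_nonneg _)
  · isBoundedDefault

variable [MeasurableSpace X]

lemma katok_nonneg (μ : Measure X) (ε δ : ℝ) : 0 ≤ katokEntLower T μ ε δ := by
  apply le_liminf_of_le
  · isBoundedDefault
  filter_upwards with n
  exact_mod_cast div_nonneg (Real.log_natCast_nonneg _) (Nat.cast_nonneg _)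

lemma katok_le_sep (hT : Continuous T) (μ : Measure X) [IsProbabilityMeasure μ] (ε δ : ℝ)
    (hε : 0 < ε) (hδ : δ < 1) : katokEntLower T μ (2 * ε) δ ≤ sepEnt T univ ε := by
  refine le_trans (liminf_le_limsup) (limsup_le_limsup ?_)
  filter_upwards with n
  rw [EReal.coe_le_coe_iff]
  have h : katokNum T μ n (2 * ε) δ ≤ sepNum T n univ ε := by
    obtain ⟨E, hE, hc⟩ := sep_max T hT n ε hε
    rw [← hE]
    apply Nat.sInf_le
    refine ⟨E, ?_, rfl⟩
    have : (⋃ x ∈ E, dynBall T n x (2 * ε)) = univ := by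
      ext x
      simp only [mem_iUnion, mem_univ, iff_true]
      obtain ⟨y, hy, h⟩ := hc x
      exact ⟨y, hy, lt_of_le_of_lt h (by linarith)⟩
    rw [this, measure_univ]
    rw [← ENNReal.ofReal_one]
    exact (ENNReal.ofReal_lt_ofReal_iff one_pos).2 hδ
  refine div_le_div_of_nonneg_right ?_ (Nat.cast_nonneg n)
  rcases Nat.eq_zero_or_pos (katokNum T μ n (2 * ε) δ) with h0 | h0
  · rw [h0, Nat.cast_zero, Real.log_zero]; exact Real.log_natCast_nonneg _
  · apply Real.log_le_log (by exact_mod_cast h0)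
    exact_mod_cast h

variable [BorelSpace X] [Nonempty X]

lemma sep_le_katok (hT : Continuous T) (ε δ : ℝ) (hε : 0 < ε) (hδ0 : 0 < δ) (hδ : δ < 1) :
    sepEnt T univ (4 * ε) ≤ ⨆ μ ∈ ergodicMeasures T, katokEntLower T μ ε δ := by
  classical
  apply EReal.le_of_forall_lt_iff_le.1
  intro b hb
  have hb0 : 0 ≤ b := by
    obtain ⟨μ, h1, h2⟩ := exists_ergodic T hT
    have h3 : katokEntLower T μ ε δ ≤ ⨆ μ ∈ ergodicMeasures T, katokEntLower T μ ε δ :=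
      le_iSup₂ (f := fun μ (_ : μ ∈ ergodicMeasures T) => katokEntLower T μ ε δ) μ ⟨h1, h2⟩
    exact_mod_cast (katok_nonneg T μ ε δ).trans (h3.trans hb.le)
  obtain ⟨D, hD⟩ := dyn_cover T hT 1 ε hε
  have hD' : ∀ x, ∃ d : {y // y ∈ D}, dist d.1 x < ε := by
    intro x
    obtain ⟨y, hy, h⟩ := hD x
    exact ⟨⟨y, hy⟩, lt_of_le_of_lt (dist_le_dynDist T 1 y x 0 one_pos) h⟩
  choose p hp using hD'
  let U : {y // y ∈ D} → Set X := fun d => Metric.ball d.1 (2 * ε)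
  have hU : ∀ d, IsOpen (U d) := fun d => Metric.isOpen_ball
  have hcov : ∀ x, ∃ d, x ∈ U d := fun x => ⟨p x, by
    rw [Metric.mem_ball, dist_comm]; linarith [hp x]⟩
  let d0 := p (Classical.arbitrary X)
  have herg : ∀ ν : Measure X, IsProbabilityMeasure ν → Ergodic T ν → HamCov T U ν b 0 := by
    intro μ h1 h2
    apply hamCov_ergodic T U hT hU d0 μ h2 b δ hb0 hδ0 hδ
    have h3 : katokEntLower T μ ε δ ≤ ⨆ μ ∈ ergodicMeasures T, katokEntLower T μ ε δ :=
      le_iSup₂ (f := fun μ (_ : μ ∈ ergodicMeasures T) => katokEntLower T μ ε δ) μ ⟨h1, h2⟩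
    have h4 := frequently_lt_of_liminf_lt (by isBoundedDefault) (lt_of_le_of_lt h3 hb)
    refine (h4.and_eventually (eventually_gt_atTop 0)).mono ?_
    rintro m ⟨h5, hm⟩
    rw [EReal.coe_lt_coe_iff] at h5
    have hne : {k | ∃ F : Finset X, ENNReal.ofReal δ < μ (⋃ x ∈ F, dynBall T m x ε) ∧
        F.card = k}.Nonempty := by
      obtain ⟨F, hF⟩ := dyn_cover T hT m ε hε
      refine ⟨F.card, F, ?_, rfl⟩
      have : (⋃ x ∈ F, dynBall T m x ε) = univ := by
        ext x
        simp only [mem_iUnion, mem_univ, iff_true]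
        obtain ⟨y, hy, h⟩ := hF x
        exact ⟨y, hy, h⟩
      rw [this, measure_univ, ← ENNReal.ofReal_one]
      exact (ENNReal.ofReal_lt_ofReal_iff one_pos).2 hδ
    obtain ⟨F, hF1, hF2⟩ := Nat.sInf_mem hne
    have hF3 : F.card = katokNum T μ m ε δ := hF2
    let w : X → List {y // y ∈ D} := fun y => (List.range m).map fun k => p (T^[k] y)
    refine ⟨F.image w, ?_, ?_, ?_⟩
    · intro l hl
      obtain ⟨y, _, rfl⟩ := Finset.mem_image.1 hl
      simp [w]
    · have c1 : ((F.image w).card : ℝ) ≤ katokNum T μ m ε δ := by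
        rw [← hF3]; exact_mod_cast Finset.card_image_le
      refine c1.trans ?_
      rcases Nat.eq_zero_or_pos (katokNum T μ m ε δ) with h0 | h0
      · rw [h0]; simp; positivity
      · rw [div_lt_iff₀ (by exact_mod_cast hm)] at h5
        rw [← Real.log_le_iff_le_exp (by exact_mod_cast h0)]
        exact h5.le
    · have c2 : (⋃ x ∈ F, dynBall T m x ε) ⊆ good T U (F.image w) 0 := by
        intro x hx
        obtain ⟨y, hy, h⟩ := mem_iUnion₂.1 hx
        refine ⟨w y, Finset.mem_image_of_mem w hy, ?_⟩
        have : mism T U x (w y) = 0 := by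
          rw [mism_zero_iff]
          intro k hk
          have hk' : k < m := by simpa [w] using hk
          simp only [w, List.getElem_map, List.getElem_range, U, Metric.mem_ball]
          have e1 := lt_of_le_of_lt (dist_le_dynDist T m y x k hk') h
          have e2 := hp (T^[k] y)
          have e3 := dist_triangle (T^[k] x) (T^[k] y) (p (T^[k] y)).1
          rw [dist_comm (T^[k] x) (T^[k] y), dist_comm (T^[k] y) (p (T^[k] y)).1] at e3
          linarith
        rw [this]; simp
      have c3 := lt_of_lt_of_le hF1 (measure_mono c2)
      rwa [ENNReal.ofReal_lt_iff_lt_toReal hδ0.le (measure_ne_top _ _)] at c3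
  have hinv : ∀ ν : Measure X, IsProbabilityMeasure ν → MeasurePreserving T ν ν → HamCov T U ν b 0 := by
    intro ν h1 h2
    exact hamCov_invariant T U hT hU d0 b hb0 herg ν h2
  apply EReal.le_of_forall_lt_iff_le.1
  intro c hc
  have hc' : b < c := by exact_mod_cast hc
  obtain ⟨N0, hN0⟩ := globalize T U hcov hT hU d0 b hb0 hinv (c - b) (by linarith)
  apply limsup_le_of_le
  · isBoundedDefault
  filter_upwards [eventually_ge_atTop N0, eventually_gt_atTop 0] with N hN hNpos
  rw [EReal.coe_le_coe_iff]
  obtain ⟨Q, hQ1, hQ2, hQ3⟩ := hN0 N hN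
  choose q hq hq' using hQ3
  have h1 : sepNum T N univ (4 * ε) ≤ Q.card := by
    apply csSup_le'
    apply sepNum_le T Q q hq
    intro x y hxy
    apply dynDist_le T (by positivity)
    intro k hk
    have e1 := (mism_zero_iff T U (q x) x).1 (hq' x) k (by rw [hQ1 _ (hq x)]; exact hk)
    have e2 := (mism_zero_iff T U (q x) y).1 (by rw [hxy]; exact hq' y) k
      (by rw [hQ1 _ (hq x)]; exact hk)
    simp only [U, Metric.mem_ball] at e1 e2
    have e3 := dist_triangle_right (T^[k] x) (T^[k] y) ((q x)[k]'(by rw [hQ1 _ (hq x)]; exact hk)).1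
    linarith
  rw [div_le_iff₀ (by exact_mod_cast hNpos)]
  rcases Nat.eq_zero_or_pos (sepNum T N univ (4 * ε)) with h0 | h0
  · rw [h0]; simp; exact mul_nonneg (by linarith) (by positivity)
  · rw [Real.log_le_iff_le_exp (by exact_mod_cast h0)]
    have h2 : (sepNum T N univ (4 * ε) : ℝ) ≤ Q.card := by exact_mod_cast h1
    refine h2.trans (hQ2.trans ?_)
    apply le_of_eq; congr 1; ring

end Fin6

section Theorems

variable [MetricSpace X] [CompactSpace X] [Nonempty X] [MeasurableSpace X] [BorelSpace X]

/-- Variational principle for the lower metric mean dimension in terms of the lower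
Katok entropy (Proposition 5.2, second part). -/
theorem lower_mdim_eq_liminf_lowerKatok (T : X → X) (hT : IsHomeomorph T)
    (δ : ℝ) (hδ : δ ∈ Set.Ioo (0:ℝ) 1) :
    mdimLower T = liminf (fun ε : ℝ =>
      (⨆ μ ∈ ergodicMeasures T, katokEntLower T μ ε δ)
        / ((Real.log (1 / ε) : ℝ) : EReal)) (𝓝[>] (0:ℝ)) := by
  have hTc := hT.continuous
  apply le_antisymm
  · apply liminf_scale (fun ε => sepEnt T univ ε)
      (fun ε => ⨆ μ ∈ ergodicMeasures T, katokEntLower T μ ε δ) 4 (by norm_num)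
    · intro ε _
      obtain ⟨μ, hμ⟩ := exists_ergodic T hTc
      exact (katok_nonneg T μ ε δ).trans
        (le_iSup₂ (f := fun μ (_ : μ ∈ ergodicMeasures T) => katokEntLower T μ ε δ) μ hμ)
    · intro ε hε
      exact sep_le_katok T hTc ε δ hε hδ.1 hδ.2
  · apply liminf_scale (fun ε => ⨆ μ ∈ ergodicMeasures T, katokEntLower T μ ε δ)
      (fun ε => sepEnt T univ ε) 2 (by norm_num)
    · intro ε _
      exact sepEnt_nonneg T ε
    · intro ε hε
      apply iSup₂_le
      intro μ hμ
      have := hμ.1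
      exact katok_le_sep T hTc μ ε δ hε hδ.2

end Theorems
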